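/- Let k be a positive integer, let ℓ = (2k+3)·(2k+6), and let N = 2^{2((k+1)·log₂ℓ + ℓ·log₂(k+2))} + 2. Then every graph G in obs_{≤si}(C_k), the minimal obstruction set for cutwidth at most k under the strong immersion order, has at most N^{k+1} vertices. -/

import Mathlib

/-- A finite undirected multigraph without loops. -/
structure Multigraph where
  V : Type
  E : Type
  finV : Finite V
  finE : Finite E
  ends : E → V × V
  loopless : ∀ e, (ends e).1 ≠ (ends e).2

attribute [instance] Multigraph.finV Multigraph.finE

namespace Multigraph

/-- `δ_G(S)`: the number of edges of `G` with exactly one endpoint in `S`. -/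
noncomputable def delta (G : Multigraph) (S : Set G.V) : ℕ :=
  {e : G.E | ¬ ((G.ends e).1 ∈ S ↔ (G.ends e).2 ∈ S)}.ncard

/-- The width `cw_σ(G)` of an ordering, represented as an injective ranking `ρ : V → ℕ`. -/
noncomputable def cwOrd (G : Multigraph) (ρ : G.V → ℕ) : ℕ :=
  sSup {w | ∃ v : G.V, w = G.delta {u | ρ u ≤ ρ v}}

/-- The cutwidth of a multigraph. -/
noncomputable def cutwidth (G : Multigraph) : ℕ :=
  sInf {w | ∃ ρ : G.V → ℕ, Function.Injective ρ ∧ G.cwOrd ρ = w}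

/-- Walks in a multigraph. -/
inductive Walk (G : Multigraph) : G.V → G.V → Type
  | nil (v : G.V) : Walk G v v
  | cons {u v w : G.V} (e : G.E)
      (h : G.ends e = (u, v) ∨ G.ends e = (v, u)) (p : Walk G v w) : Walk G u w

namespace Walk

def edges {G : Multigraph} : ∀ {u v : G.V}, G.Walk u v → List G.E
  | _, _, .nil _ => []
  | _, _, .cons e _ p => e :: p.edges

def support {G : Multigraph} : ∀ {u v : G.V}, G.Walk u v → List G.V
  | _, _, .nil v => [v]
  | u, _, .cons _ _ p => u :: p.support

end Walk

def Connected (G : Multigraph) : Prop := ∀ u v : G.V, Nonempty (G.Walk u v)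

/-- An immersion model of `H` in `G`. -/
structure ImmersionModel (H G : Multigraph) where
  vmap : H.V → G.V
  inj : Function.Injective vmap
  emap : (e : H.E) → G.Walk (vmap (H.ends e).1) (vmap (H.ends e).2)
  isPath : ∀ e, ((emap e).support).Nodup
  edgeDisj : ∀ e e', e ≠ e' → ∀ f, f ∈ (emap e).edges → f ∉ (emap e').edges

/-- `H ≤_i G`. -/
def Immersion (H G : Multigraph) : Prop := Nonempty (ImmersionModel H G)

/-- A strong immersion model: no internal vertex of a path is a branch vertex. -/
structure StrongImmersionModel (H G : Multigraph) extends ImmersionModel H G where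
  strong : ∀ e, ∀ x, x ∈ (emap e).support →
    x ≠ vmap (H.ends e).1 → x ≠ vmap (H.ends e).2 → x ∉ Set.range vmap

/-- `H ≤_si G`. -/
def StrongImmersion (H G : Multigraph) : Prop := Nonempty (StrongImmersionModel H G)

/-- Isomorphism of multigraphs. -/
structure Iso (G H : Multigraph) where
  fv : G.V ≃ H.V
  fe : G.E ≃ H.E
  pres : ∀ e, H.ends (fe e) = (fv (G.ends e).1, fv (G.ends e).2)
           ∨ H.ends (fe e) = (fv (G.ends e).2, fv (G.ends e).1)

def Isomorphic (G H : Multigraph) : Prop := Nonempty (Iso G H)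

/-- The minimal obstruction set of a class `C` with respect to a partial order `le`. -/
def obstructions (le : Multigraph → Multigraph → Prop) (C : Set Multigraph) :
    Set Multigraph :=
  {G | G ∉ C ∧ ∀ G', le G' G → ¬ G'.Isomorphic G → G' ∈ C}

/-- `C_k`: the class of multigraphs of cutwidth at most `k`. -/
def cutwidthClass (k : ℕ) : Set Multigraph := {G | G.cutwidth ≤ k}

/-- The degree of a vertex (each parallel edge counts once at each endpoint). -/
noncomputable def degree (G : Multigraph) (v : G.V) : ℕ :=
  {e : G.E | (G.ends e).1 = v ∨ (G.ends e).2 = v}.ncard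

/-- The number of `A`-blocks of an ordering `ρ`: the number of maximal runs of
consecutive (in `ρ`) vertices belonging to `A`, counted via block-starting vertices. -/
noncomputable def blockCount (G : Multigraph) (ρ : G.V → ℕ) (A : Set G.V) : ℕ :=
  {v : G.V | v ∈ A ∧ ∀ u : G.V, ρ u < ρ v →
      ∃ w : G.V, w ∉ A ∧ ρ u ≤ ρ w ∧ ρ w < ρ v}.ncard

/-- The extension `G*` of a `k`-boundaried graph `(G, x)`. -/
def extension (G : Multigraph) {k : ℕ} (x : Fin k → G.V) : Multigraph where
  V := G.V ⊕ Fin k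
  E := G.E ⊕ Fin k
  finV := inferInstance
  finE := inferInstance
  ends := Sum.elim (fun e => (Sum.inl (G.ends e).1, Sum.inl (G.ends e).2))
                   (fun i => (Sum.inl (x i), Sum.inr i))
  loopless := by
    rintro (e | i)
    · simpa using G.loopless e
    · simp

/-- The join `𝐀 ⊕ 𝐁` of two `k`-boundaried graphs. -/
def join {k : ℕ} (A B : Multigraph) (x : Fin k → A.V) (y : Fin k → B.V) : Multigraph where
  V := A.V ⊕ B.V
  E := (A.E ⊕ B.E) ⊕ Fin k
  finV := inferInstance
  finE := inferInstance
  ends := Sum.elim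
    (Sum.elim (fun e => (Sum.inl (A.ends e).1, Sum.inl (A.ends e).2))
              (fun e => (Sum.inr (B.ends e).1, Sum.inr (B.ends e).2)))
    (fun i => (Sum.inl (x i), Sum.inr (y i)))
  loopless := by
    rintro ((e | e) | i)
    · simpa using A.loopless e
    · simpa using B.loopless e
    · simp

/-- An `ℓ`-bucketing of an ordering `ρ` (buckets indexed 1,…,ℓ). -/
def IsBucketing (G : Multigraph) (ρ : G.V → ℕ) (ℓ : ℕ) (T : G.V → ℕ) : Prop :=
  (∀ v, 1 ≤ T v ∧ T v ≤ ℓ) ∧ ∀ u v : G.V, ρ u ≤ ρ v → T u ≤ T v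

/-- `width(G,σ,T,i)`: the maximum size of a cut in `cuts(G,σ,T,i)`; these cuts
are described by their left side `S`, which contains all buckets before `i`,
a `σ`-downward-closed part of bucket `i`, and nothing else. -/
noncomputable def bucketWidth (G : Multigraph) (ρ : G.V → ℕ) (T : G.V → ℕ) (i : ℕ) : ℕ :=
  sSup {w | ∃ S : Set G.V,
    (∀ v, T v < i → v ∈ S) ∧ (∀ v ∈ S, T v ≤ i) ∧
    (∀ u v : G.V, T u = i → T v = i → ρ u ≤ ρ v → v ∈ S → u ∈ S) ∧
    w = G.delta S}

/-- A `(k,ℓ)`-bucket interface. -/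
structure BucketInterface (k ℓ : ℕ) where
  b : Fin k → ℕ
  b' : Fin k → ℕ
  mu : ℕ → ℕ
  mu' : ℕ → ℕ
  b_mem : ∀ i, b i ∈ Set.Icc 1 ℓ
  b'_mem : ∀ i, b' i ∈ Set.Icc 1 ℓ
  mu_le : ∀ j, mu j ≤ k
  mu'_le : ∀ j, mu' j ≤ k

/-- A `k`-boundaried graph `(G, x)` conforms with a `(k,ℓ)`-bucket interface. -/
def Conforms {k : ℕ} (G : Multigraph) (x : Fin k → G.V) (ℓ : ℕ)
    (I : BucketInterface k ℓ) : Prop :=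
  ∃ ρ : (G.extension x).V → ℕ, Function.Injective ρ ∧
  ∃ T : (G.extension x).V → ℕ, (G.extension x).IsBucketing ρ ℓ T ∧
    (∀ v : G.V, Odd (T (Sum.inl v))) ∧
    (∀ i : Fin k, Even (T (Sum.inr i))) ∧
    (∀ i : Fin k, T (Sum.inl (x i)) = I.b i) ∧
    (∀ i : Fin k, T (Sum.inr i) = I.b' i) ∧
    (∀ j ∈ Set.Icc 1 ℓ,
      G.bucketWidth (fun v => ρ (Sum.inl v)) (fun v => T (Sum.inl v)) j ≤ I.mu j) ∧
    (∀ j ∈ Set.Icc 1 ℓ, (G.extension x).bucketWidth ρ T j ≤ I.mu' j)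

/-- `m` pairwise edge-disjoint paths between the sets `X` and `Y`. -/
def ConnectorBetween (G : Multigraph) (X Y : Set G.V) (m : ℕ) : Prop :=
  ∃ (s t : Fin m → G.V) (P : (i : Fin m) → G.Walk (s i) (t i)),
    (∀ i, s i ∈ X) ∧ (∀ i, t i ∈ Y) ∧ (∀ i, (P i).support.Nodup) ∧
    ∀ i j, i ≠ j → ∀ f, f ∈ (P i).edges → f ∉ (P j).edges

/-- A linked ordering. -/
def Linked (G : Multigraph) (ρ : G.V → ℕ) : Prop :=
  ∀ u u' : G.V, ρ u ≤ ρ u' →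
    G.ConnectorBetween {z | ρ z ≤ ρ u} {z | ¬ ρ z ≤ ρ u'}
      (sInf {w | ∃ v : G.V, ρ u ≤ ρ v ∧ ρ v ≤ ρ u' ∧ w = G.delta {z | ρ z ≤ ρ v}})

/-- The multigraph obtained by deleting a set of edges. -/
def deleteEdges (G : Multigraph) (F : Set G.E) : Multigraph where
  V := G.V
  E := {e : G.E // e ∉ F}
  finV := G.finV
  finE := inferInstance
  ends e := G.ends e.1
  loopless e := G.loopless e.1

/-- `dcw_k(G)`: minimum number of edges to delete to reach cutwidth at most `k`. -/
noncomputable def dcw (k : ℕ) (G : Multigraph) : ℕ :=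
  sInf {w | ∃ F : Set G.E, (G.deleteEdges F).cutwidth ≤ k ∧ F.ncard = w}

/-- The class `C_{w,k}`. -/
def dcwClass (w k : ℕ) : Set Multigraph := {G | dcw k G ≤ w}

/-- Induced subgraph `G[X]`. -/
def induce (G : Multigraph) (X : Set G.V) : Multigraph where
  V := X
  E := {e : G.E // (G.ends e).1 ∈ X ∧ (G.ends e).2 ∈ X}
  finV := inferInstance
  finE := inferInstance
  ends e := (⟨(G.ends e.1).1, e.2.1⟩, ⟨(G.ends e.1).2, e.2.2⟩)
  loopless := by
    intro e h
    exact G.loopless e.1 (Subtype.ext_iff.mp h)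

/-- A graph is `ℋ`-immersion-free if it contains no member of `ℋ` as an immersion. -/
def ImmersionFree (H : Set Multigraph) (G : Multigraph) : Prop :=
  ∀ X ∈ H, ¬ Immersion X G

/-- `aic_ℋ(G)`: minimum number of edge deletions to reach an `ℋ`-immersion-free graph. -/
noncomputable def aic (H : Set Multigraph) (G : Multigraph) : ℕ :=
  sInf {w | ∃ F : Set G.E, ImmersionFree H (G.deleteEdges F) ∧ F.ncard = w}

/-- The class `C_{w,ℋ}`. -/
def aicClass (w : ℕ) (H : Set Multigraph) : Set Multigraph := {G | aic H G ≤ w}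

/-- `ℋ` is a `≤_i`-antichain. -/
def IsAntichainImm (H : Set Multigraph) : Prop :=
  ∀ G₁ ∈ H, ∀ G₂ ∈ H, Immersion G₁ G₂ → Isomorphic G₁ G₂

/-- Disjoint union of two multigraphs. -/
def disjUnion (G H : Multigraph) : Multigraph where
  V := G.V ⊕ H.V
  E := G.E ⊕ H.E
  finV := inferInstance
  finE := inferInstance
  ends := Sum.elim (fun e => (Sum.inl (G.ends e).1, Sum.inl (G.ends e).2))
                   (fun e => (Sum.inr (H.ends e).1, Sum.inr (H.ends e).2))
  loopless := by
    rintro (e | e)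
    · simpa using G.loopless e
    · simpa using H.loopless e

/-- Disjoint union of a finite family of multigraphs. -/
def sigmaUnion {m : ℕ} (Gs : Fin m → Multigraph) : Multigraph where
  V := Σ i, (Gs i).V
  E := Σ i, (Gs i).E
  finV := inferInstance
  finE := inferInstance
  ends e := (⟨e.1, ((Gs e.1).ends e.2).1⟩, ⟨e.1, ((Gs e.1).ends e.2).2⟩)
  loopless := by
    intro e h
    exact (Gs e.1).loopless e.2 (by simpa using h)

/-- `cw_σ(G,X) = δ_G(X) + cw_{σ_X}(G[X])`. -/
noncomputable def cwRel (G : Multigraph) (ρ : G.V → ℕ) (X : Set G.V) : ℕ :=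
  G.delta X + (G.induce X).cwOrd (fun v => ρ v.val)

/-- Membership in the family of prefixes relevant to `X`-linkedness: the complement
of `X` (the prefix right before `X` starts) and the prefixes ending inside `X`. -/
def IsXPrefix (G : Multigraph) (ρ : G.V → ℕ) (X : Set G.V) (P : Set G.V) : Prop :=
  P = Xᶜ ∨ ∃ v ∈ X, P = {z | ρ z ≤ ρ v}

/-- An `X`-linked ordering. -/
def XLinked (G : Multigraph) (ρ : G.V → ℕ) (X : Set G.V) : Prop :=
  (∀ u v : G.V, u ∉ X → v ∈ X → ρ u < ρ v) ∧
  ∀ P P' : Set G.V, G.IsXPrefix ρ X P → G.IsXPrefix ρ X P' → P ⊆ P' →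
    G.ConnectorBetween P P'ᶜ
      (sInf {w | ∃ Q : Set G.V, G.IsXPrefix ρ X Q ∧ P ⊆ Q ∧ Q ⊆ P' ∧ w = G.delta Q})

end Multigraph

/-!
An obstruction `G` for cutwidth `k` has cutwidth at most `k + 1`, since deleting an edge changes
each cut by at most one. Take a layout of width at most `k + 1` with the least total size of cuts.
By submodularity it is linked: no set between two of its prefixes has a smaller cut than all the
prefixes in between. If `G` is large, the pigeonhole principle yields a long chain of prefixes
`P 0 ⊂ P 1 ⊂ ⋯` whose cuts have the same size `r` and which no smaller cut separates, so Menger's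
theorem links their cuts by `r` edge-disjoint walks. Contracting these walks between `P i` and
`P (i + 1)` shows that `P i`, joined to the complement of `P (i + 1)` by `r` edges, is a proper
strong immersion in `G` and hence has a layout of width at most `k`.

Such a layout can be rearranged until it alternates only boundedly often between the two sides,
and each side then sees the other through an interface of bounded size. Two equal interfaces in
the chain would, by the exchange of sides and the linkage again, give a layout of `G` itself of
width at most `k`. Hence the chain is no longer than the number of interfaces.
-/

/-! ## Cuts and layouts -/

theorem ncard_add_ncard_le_of_union_inter {α : Type*} [Finite α] {A B C D : Set α}
    (hunion : A ∪ B ⊆ C ∪ D) (hinter : A ∩ B ⊆ C ∩ D) :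
    A.ncard + B.ncard ≤ C.ncard + D.ncard := by
  rw [← Set.ncard_union_add_ncard_inter A B, ← Set.ncard_union_add_ncard_inter C D]
  exact Nat.add_le_add (Set.ncard_le_ncard hunion) (Set.ncard_le_ncard hinter)

theorem exists_equivFin_le_iff {α β : Type*} [Finite α] [LinearOrder β] (f : α → β)
    (hf : Function.Injective f) :
    ∃ e : α ≃ Fin (Nat.card α), ∀ a b, e a ≤ e b ↔ f a ≤ f b := by
  have := Fintype.ofFinite α
  let : LinearOrder α := LinearOrder.lift' f hf
  let e := Fintype.orderIsoFinOfCardEq α (Nat.card_eq_fintype_card (α := α)).symm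
  exact ⟨e.symm.toEquiv, fun a b => e.symm.le_iff_le⟩

namespace Multigraph

variable {G H : Multigraph} {S R : Set G.V} {k : ℕ}

/-- The set of edges of `G` with exactly one endpoint in `S`, so that `G.delta S` is its size. -/
def cutEdges (G : Multigraph) (S : Set G.V) : Set G.E :=
  {e | ¬((G.ends e).1 ∈ S ↔ (G.ends e).2 ∈ S)}

theorem mem_cutEdges {e : G.E} :
    e ∈ G.cutEdges S ↔ ¬((G.ends e).1 ∈ S ↔ (G.ends e).2 ∈ S) :=
  Iff.rfl

theorem ncard_cutEdges (G : Multigraph) (S : Set G.V) : (G.cutEdges S).ncard = G.delta S :=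
  rfl

theorem delta_empty (G : Multigraph) : G.delta ∅ = 0 := by
  simp [delta]

theorem delta_inter_add_delta_union_le (G : Multigraph) (S R : Set G.V) :
    G.delta (S ∩ R) + G.delta (S ∪ R) ≤ G.delta S + G.delta R := by
  apply ncard_add_ncard_le_of_union_inter <;> intro e <;>
    simp only [Set.mem_union, Set.mem_inter_iff, Set.mem_ofPred_eq] <;> tauto

theorem delta_add_delta_le_of_no_edge
    (h : ∀ e, ((G.ends e).1 ∈ S \ R → (G.ends e).2 ∉ R \ S) ∧
      ((G.ends e).2 ∈ S \ R → (G.ends e).1 ∉ R \ S)) :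
    G.delta S + G.delta R ≤ G.delta (S ∩ R) + G.delta (S ∪ R) := by
  apply ncard_add_ncard_le_of_union_inter <;> intro e <;> have := h e <;>
    simp only [Set.mem_sdiff, Set.mem_union, Set.mem_inter_iff, Set.mem_ofPred_eq] at this ⊢ <;>
    tauto

/-- `f` places the vertices of `G` at distinct points of a linear order, in such a way that the
cut after each vertex has at most `k` edges. Orderings in the sense of `cutwidth` take values in
`ℕ`; other orders, in particular lexicographic ones, are used to build layouts. -/
structure IsLayout (G : Multigraph) {α : Type*} [LinearOrder α] (f : G.V → α) (k : ℕ) :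
    Prop where
  injective : Function.Injective f
  delta_le : ∀ v, G.delta {u | f u ≤ f v} ≤ k

theorem cwOrd_le_iff (G : Multigraph) (ρ : G.V → ℕ) (k : ℕ) :
    G.cwOrd ρ ≤ k ↔ ∀ v, G.delta {u | ρ u ≤ ρ v} ≤ k := by
  have hbdd : BddAbove {w | ∃ v : G.V, w = G.delta {u | ρ u ≤ ρ v}} :=
    ((Set.finite_range fun v => G.delta {u | ρ u ≤ ρ v}).subset
      (by rintro w ⟨v, rfl⟩; exact ⟨v, rfl⟩)).bddAbove
  rw [cwOrd, csSup_le_iff' hbdd]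
  exact ⟨fun h v => h _ ⟨v, rfl⟩, by rintro h w ⟨v, rfl⟩; exact h v⟩

theorem cutwidth_le_iff (G : Multigraph) (k : ℕ) :
    G.cutwidth ≤ k ↔ ∃ ρ : G.V → ℕ, G.IsLayout ρ k := by
  constructor
  · intro h
    obtain ⟨ρ₀, hρ₀⟩ := Countable.exists_injective_nat G.V
    obtain ⟨ρ, hρ, hw⟩ := Nat.sInf_mem (s := {w | ∃ ρ : G.V → ℕ,
      Function.Injective ρ ∧ G.cwOrd ρ = w}) ⟨_, ρ₀, hρ₀, rfl⟩
    exact ⟨ρ, hρ, (G.cwOrd_le_iff ρ k).1 (hw.trans_le h)⟩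
  · rintro ⟨ρ, hρ, hk⟩
    exact le_trans (Nat.sInf_le ⟨ρ, hρ, rfl⟩) ((G.cwOrd_le_iff ρ k).2 hk)

namespace IsLayout

variable {α : Type*} [LinearOrder α] {f : G.V → α}

theorem exists_equivFin (hf : G.IsLayout f k) :
    ∃ e : G.V ≃ Fin (Nat.card G.V), G.IsLayout e k ∧ ∀ u v, e u ≤ e v ↔ f u ≤ f v := by
  obtain ⟨e, he⟩ := exists_equivFin_le_iff f hf.injective
  exact ⟨e, ⟨e.injective, fun v => by simpa only [he] using hf.delta_le v⟩, he⟩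

theorem cutwidth_le (hf : G.IsLayout f k) : G.cutwidth ≤ k := by
  obtain ⟨e, he, -⟩ := hf.exists_equivFin
  exact (G.cutwidth_le_iff k).2
    ⟨fun v => e v, Fin.val_injective.comp he.injective, he.delta_le⟩

theorem delta_le_of_lower (hf : G.IsLayout f k) (hS : ∀ u v, f u ≤ f v → v ∈ S → u ∈ S) :
    G.delta S ≤ k := by
  obtain rfl | hne := S.eq_empty_or_nonempty
  · simp [delta_empty]
  · obtain ⟨v, hv, hmax⟩ := S.exists_max_image f S.toFinite hne
    have : S = {u | f u ≤ f v} := Set.ext fun u => ⟨hmax u, fun h => hS u v h hv⟩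
    exact this ▸ hf.delta_le v

end IsLayout

theorem cutwidth_le_cutwidth_of_delta_preimage_le (φ : G.V → H.V) (hφ : Function.Injective φ)
    (hδ : ∀ S, G.delta (φ ⁻¹' S) ≤ H.delta S) : G.cutwidth ≤ H.cutwidth := by
  obtain ⟨ρ, hρ⟩ := (H.cutwidth_le_iff _).1 le_rfl
  exact IsLayout.cutwidth_le ⟨hρ.injective.comp hφ, fun v => (hδ _).trans (hρ.delta_le (φ v))⟩

/-! ## Deleting an edge -/

theorem delta_deleteEdges (F : Set G.E) (S : Set G.V) :
    (G.deleteEdges F).delta S = (G.cutEdges S \ F).ncard := by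
  have : G.cutEdges S \ F = Subtype.val '' {e : {e // e ∉ F} | e.1 ∈ G.cutEdges S} := by
    ext e
    simp [and_comm]
  rw [this, Set.ncard_image_of_injective _ Subtype.val_injective]
  rfl

theorem delta_le_delta_deleteEdges_add_ncard (F : Set G.E) (S : Set G.V) :
    G.delta S ≤ (G.deleteEdges F).delta S + F.ncard := by
  rw [delta_deleteEdges]
  exact Set.ncard_le_ncard_sdiff_add_ncard _ F

/-- The walk along a single edge. -/
def Walk.ofEdge (e : G.E) : G.Walk (G.ends e).1 (G.ends e).2 := .cons e (.inl rfl) (.nil _)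

theorem Walk.nodup_support_ofEdge (e : G.E) : (Walk.ofEdge e).support.Nodup :=
  List.nodup_cons.2 ⟨mt List.mem_singleton.1 (G.loopless e), List.nodup_singleton _⟩

theorem Walk.mem_support_ofEdge {e : G.E} {x : G.V} :
    x ∈ (Walk.ofEdge e).support ↔ x = (G.ends e).1 ∨ x = (G.ends e).2 :=
  List.mem_pair

theorem Walk.mem_edges_ofEdge {e f : G.E} : f ∈ (Walk.ofEdge e).edges ↔ f = e :=
  List.mem_singleton

theorem strongImmersion_deleteEdges (F : Set G.E) : StrongImmersion (G.deleteEdges F) G :=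
  ⟨{ vmap := id
     inj := Function.injective_id
     emap := fun e => .ofEdge e.1
     isPath := fun e => Walk.nodup_support_ofEdge e.1
     edgeDisj := fun _ _ hne _ hf hf' => hne <| Subtype.ext <|
      (Walk.mem_edges_ofEdge.1 hf).symm.trans (Walk.mem_edges_ofEdge.1 hf')
     strong := fun _ _ hx h₁ h₂ => absurd (Walk.mem_support_ofEdge.1 hx) (not_or.2 ⟨h₁, h₂⟩) }⟩

theorem not_isomorphic_deleteEdges {F : Set G.E} (hF : F.Nonempty) :
    ¬(G.deleteEdges F).Isomorphic G := by
  rintro ⟨i⟩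
  have hcard : (Fᶜ).ncard = Nat.card G.E := Nat.card_congr i.fe
  have := Set.ncard_add_ncard_compl F
  have := (Set.ncard_pos).2 hF
  omega

theorem cutwidth_le_succ_of_mem_obstructions
    (hG : G ∈ obstructions StrongImmersion (cutwidthClass k)) : G.cutwidth ≤ k + 1 := by
  obtain hE | ⟨⟨e⟩⟩ := isEmpty_or_nonempty G.E
  · obtain ⟨ρ, hρ⟩ := Countable.exists_injective_nat G.V
    exact IsLayout.cutwidth_le ⟨hρ, fun v => by simp [delta, Set.eq_empty_of_isEmpty]⟩
  · obtain ⟨ρ, hρ⟩ := (cutwidth_le_iff _ k).1 <|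
      hG.2 _ (strongImmersion_deleteEdges {e}) (not_isomorphic_deleteEdges ⟨e, rfl⟩)
    refine IsLayout.cutwidth_le ⟨hρ.injective, fun v => ?_⟩
    exact (delta_le_delta_deleteEdges_add_ncard {e} _).trans <|
      Nat.add_le_add (hρ.delta_le v) (Set.ncard_singleton e).le

end Multigraph

/-! ## Alternating layouts with few blocks -/

theorem exists_weak_local_max {a : ℕ → ℕ} {k : ℕ} (ha : ∀ i ≤ 2 * k + 2, a i ≤ k) :
    ∃ j ≤ 2 * k, a j ≤ a (j + 1) ∧ a (j + 2) ≤ a (j + 1) := by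
  by_contra! hno
  by_cases hasc : ∃ j ≤ k, a j ≤ a (j + 1)
  · obtain ⟨j, hj, hj'⟩ := hasc
    have hincr : ∀ d ≤ k + 1, a (j + d) ≤ a (j + d + 1) ∧ d ≤ a (j + d + 1) := by
      intro d hd
      induction d with
      | zero => exact ⟨hj', Nat.zero_le _⟩
      | succ d ih =>
        have := hno (j + d) (by omega) (ih (by omega)).1
        have := ih (by omega)
        change a (j + d + 1) ≤ a (j + d + 2) ∧ d + 1 ≤ a (j + d + 2)
        omega
    have := hincr (k + 1) le_rfl
    have := ha (j + (k + 1) + 1) (by omega)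
    omega
  · push Not at hasc
    have hdecr : ∀ d ≤ k + 1, a d + d ≤ a 0 := by
      intro d hd
      induction d with
      | zero => exact le_rfl
      | succ d ih =>
        have := hasc d (by omega)
        have := ih (by omega)
        omega
    have := hdecr (k + 1) le_rfl
    have := ha 0 (by omega)
    omega

theorem exists_le_ncard_forall_ne {α : Type*} [Finite α] (F : Set α) (g : α → ℕ) :
    ∃ c ≤ F.ncard, ∀ x ∈ F, g x ≠ c := by
  by_contra! h
  have hsub : ↑(Finset.range (F.ncard + 1)) ⊆ g '' F := by
    intro c hc
    exact h c (Nat.lt_succ_iff.1 (Finset.mem_range.1 hc))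
  have := (Set.ncard_le_ncard hsub).trans (Set.ncard_image_le F.toFinite)
  rw [Set.ncard_coe_finset, Finset.card_range] at this
  omega

namespace Multigraph

variable {G : Multigraph} {A : Set G.V} {ρ T : G.V → ℕ} {k : ℕ}

/-- The elements listed up to and including `v` when `α` is sorted by the block index `T`, ties
being broken by `ρ`. -/
def lexPrefix {α β : Type*} [LT β] (T : α → β) (ρ : α → ℕ) (v : α) : Set α :=
  {u | T u < T v ∨ T u = T v ∧ ρ u ≤ ρ v}

theorem isLayout_toLex {β : Type*} [LinearOrder β] {T : G.V → β}
    (hinj : ∀ u v, T u = T v → ρ u = ρ v → u = v) (hk : ∀ v, G.delta (lexPrefix T ρ v) ≤ k) :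
    G.IsLayout (fun v => toLex (T v, ρ v)) k where
  injective u v huv :=
    have h := Prod.ext_iff.1 (toLex.injective huv)
    hinj u v h.1 h.2
  delta_le v := by
    simp only [Prod.Lex.toLex_le_toLex]
    exact hk v

theorem delta_lt_le_of_lexPrefix {β : Type*} [LinearOrder β] {T : G.V → β}
    (hinj : ∀ u v, T u = T v → ρ u = ρ v → u = v) (hk : ∀ v, G.delta (lexPrefix T ρ v) ≤ k)
    (j : β) : G.delta {v | T v < j} ≤ k := by
  refine (isLayout_toLex hinj hk).delta_le_of_lower fun u v huv hv => ?_
  rw [Prod.Lex.toLex_le_toLex] at huv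
  exact (huv.elim le_of_lt fun h => h.1.le).trans_lt hv

/-- A layout of width at most `k` divided into consecutive blocks, `T v` being the index of the
block of `v` and `ρ` the order within each block. The parity of the index is thought of as the
colour of a block; blocks of the same colour appear in the order given by `ρ`, so that they can be
merged without changing `ρ`. -/
structure IsBlockLayout (G : Multigraph) (ρ T : G.V → ℕ) (k : ℕ) : Prop where
  injective : Function.Injective ρ
  lt_of_lt : ∀ u v, T u % 2 = T v % 2 → T u < T v → ρ u < ρ v
  delta_le : ∀ v, G.delta (lexPrefix T ρ v) ≤ k

/-- The block indices after moving block `i + 2` in front of block `i + 1` and merging it with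
block `i`, and block `i + 1` with block `i + 3`. -/
def contractBlocks {α : Type*} (T : α → ℕ) (i : ℕ) (v : α) : ℕ :=
  if i + 2 ≤ T v then T v - 2 else T v

theorem contractBlocks_mod_two {α : Type*} (T : α → ℕ) (i : ℕ) (v : α) :
    contractBlocks T i v % 2 = T v % 2 := by
  unfold contractBlocks
  split_ifs <;> omega

namespace IsBlockLayout

theorem delta_lt_le (h : G.IsBlockLayout ρ T k) (j : ℕ) : G.delta {v | T v < j} ≤ k :=
  delta_lt_le_of_lexPrefix (fun _ _ _ huv => h.injective huv) h.delta_le j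

theorem lexPrefix_contractBlocks_eq (h : G.IsBlockLayout ρ T k) {i : ℕ} {v : G.V}
    (h₁ : T v ≠ i + 1) (h₂ : T v ≠ i + 2) :
    lexPrefix (contractBlocks T i) ρ v = lexPrefix T ρ v := by
  ext u
  have := h.lt_of_lt u v
  have := h.lt_of_lt v u
  simp only [lexPrefix, contractBlocks, Set.mem_ofPred_eq]
  split_ifs <;> omega

theorem contract (h : G.IsBlockLayout ρ T k) {i : ℕ}
    (hedge : ∀ e, (T (G.ends e).1 = i + 1 → T (G.ends e).2 ≠ i + 2) ∧
      (T (G.ends e).1 = i + 2 → T (G.ends e).2 ≠ i + 1))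
    (hleft : G.delta {v | T v < i + 1} ≤ G.delta {v | T v < i + 2})
    (hright : G.delta {v | T v < i + 3} ≤ G.delta {v | T v < i + 2}) :
    G.IsBlockLayout ρ (contractBlocks T i) k := by
  refine ⟨h.injective, fun u v huv hlt => ?_, fun v => ?_⟩
  · rw [contractBlocks_mod_two, contractBlocks_mod_two] at huv
    refine h.lt_of_lt u v huv ?_
    unfold contractBlocks at hlt
    split_ifs at hlt <;> omega
  set S := lexPrefix (contractBlocks T i) ρ v with hS
  set B := {u | T u < i + 2} with hB
  have hv := h.delta_le v
  by_cases hmoved : T v = i + 1 ∨ T v = i + 2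
  · have hmod : G.delta S + G.delta B ≤ G.delta (S ∩ B) + G.delta (S ∪ B) := by
      refine delta_add_delta_le_of_no_edge fun e => ?_
      have := hedge e
      have := h.lt_of_lt v (G.ends e).1
      have := h.lt_of_lt v (G.ends e).2
      have := h.lt_of_lt (G.ends e).1 v
      have := h.lt_of_lt (G.ends e).2 v
      simp only [hS, hB, lexPrefix, contractBlocks, Set.mem_sdiff, Set.mem_ofPred_eq]
      split_ifs <;> omega
    suffices h' : (S ∩ B = lexPrefix T ρ v ∧ S ∪ B = {u | T u < i + 3}) ∨
        (S ∩ B = {u | T u < i + 1} ∧ S ∪ B = lexPrefix T ρ v) by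
      obtain ⟨h₁, h₂⟩ | ⟨h₁, h₂⟩ := h' <;> rw [h₁, h₂] at hmod <;> omega
    refine hmoved.imp (fun hv => ⟨?_, ?_⟩) (fun hv => ⟨?_, ?_⟩) <;> ext u <;>
      have := h.lt_of_lt u v <;> have := h.lt_of_lt v u <;>
      simp only [hS, hB, lexPrefix, contractBlocks, Set.mem_inter_iff, Set.mem_union,
        Set.mem_ofPred_eq] <;> split_ifs <;> omega
  · rw [hS, h.lexPrefix_contractBlocks_eq (by tauto) (by tauto)]
    exact hv

theorem exists_contractible (h : G.IsBlockLayout ρ T k) (hA : ∀ v, T v % 2 = 0 ↔ v ∈ A) :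
    ∃ i, i + 2 ≤ (G.delta A + 1) * (2 * k + 2) ∧
      G.IsBlockLayout ρ (contractBlocks T i) k := by
  obtain ⟨c, hc, hfree⟩ := exists_le_ncard_forall_ne (G.cutEdges A)
    fun e => (T (G.ends e).1 - 1) / (2 * k + 2)
  obtain ⟨j, hj, hleft, hright⟩ := exists_weak_local_max (k := k)
    (a := fun i => G.delta {v | T v < c * (2 * k + 2) + 1 + i}) fun i _ => h.delta_lt_le _
  have hc' : c * (2 * k + 2) ≤ G.delta A * (2 * k + 2) := Nat.mul_le_mul_right _ hc
  refine ⟨c * (2 * k + 2) + j, by rw [add_one_mul]; omega, h.contract (fun e => ?_) ?_ ?_⟩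
  · have hdiv (x : ℕ) (hx : x = c * (2 * k + 2) + j + 1 ∨ x = c * (2 * k + 2) + j + 2) :
        (x - 1) / (2 * k + 2) = c :=
      Nat.div_eq_of_lt_le (by omega) (by rw [add_one_mul]; omega)
    have hcross (hne : T (G.ends e).1 % 2 ≠ T (G.ends e).2 % 2) : e ∈ G.cutEdges A := by
      rw [mem_cutEdges, ← hA, ← hA]
      omega
    exact ⟨fun h₁ h₂ => hfree e (hcross (by omega)) (hdiv _ (.inl h₁)),
      fun h₁ h₂ => hfree e (hcross (by omega)) (hdiv _ (.inr h₁))⟩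
  · convert hleft using 4 <;> omega
  · convert hright using 4 <;> omega

end IsBlockLayout

theorem exists_isBlockLayout (hG : G.cutwidth ≤ k) (A : Set G.V) :
    ∃ ρ T, G.IsBlockLayout ρ T k ∧ ∀ v, T v % 2 = 0 ↔ v ∈ A := by
  classical
  obtain ⟨ρ, hρ⟩ := (cutwidth_le_iff G k).1 hG
  refine ⟨ρ, fun v => 2 * ρ v + if v ∈ A then 0 else 1, ⟨hρ.injective, ?_, fun v => ?_⟩, ?_⟩
  · intro u v huv hlt
    beta_reduce at huv hlt
    split_ifs at huv hlt <;> omega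
  · convert hρ.delta_le v using 2
    ext u
    simp only [lexPrefix, Set.mem_ofPred_eq]
    obtain rfl | h := eq_or_ne u v
    · simp
    · have := hρ.injective.ne h
      split_ifs <;> omega
  · intro v
    beta_reduce
    split_ifs with h <;> simp [h, Nat.add_mod]

theorem exists_isBlockLayout_lt (hG : G.cutwidth ≤ k) (A : Set G.V) :
    ∃ ρ T, G.IsBlockLayout ρ T k ∧ (∀ v, T v % 2 = 0 ↔ v ∈ A) ∧
      ∀ v, T v < (G.delta A + 1) * (2 * k + 2) := by
  obtain ⟨ρ, T, h, hA⟩ := exists_isBlockLayout hG A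
  obtain ⟨n, hn⟩ := (Set.finite_range T).bddAbove
  have hT : ∀ v, T v ≤ n := fun v => hn ⟨v, rfl⟩
  clear hn
  induction n generalizing T with
  | zero => exact ⟨ρ, T, h, hA, fun v => (hT v).trans_lt (by positivity)⟩
  | succ n ih =>
    by_cases hn : n + 1 < (G.delta A + 1) * (2 * k + 2)
    · exact ⟨ρ, T, h, hA, fun v => (hT v).trans_lt hn⟩
    obtain ⟨i, hi, hcontr⟩ := h.exists_contractible hA
    refine ih _ hcontr (fun v => by rw [contractBlocks_mod_two, hA]) fun v => ?_
    have := hT v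
    unfold contractBlocks
    split_ifs <;> omega

theorem exists_alternating_blocks {m : ℕ} (hG : G.cutwidth ≤ k) (A : Set G.V)
    (hm : (G.delta A + 1) * (2 * k + 2) ≤ m) :
    ∃ (ρ : G.V → ℕ) (T : G.V → Fin m), Function.Injective ρ ∧
      (∀ v, (T v : ℕ) % 2 = 0 ↔ v ∈ A) ∧ ∀ v, G.delta (lexPrefix T ρ v) ≤ k := by
  obtain ⟨ρ, T, h, hA, hT⟩ := exists_isBlockLayout_lt hG A
  refine ⟨ρ, fun v => ⟨T v, (hT v).trans_le hm⟩, h.injective, hA, fun v => ?_⟩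
  simpa only [lexPrefix, Fin.mk_lt_mk, Fin.mk.injEq] using h.delta_le v

end Multigraph

/-! ## Joins and their interfaces -/

theorem ncard_eq_ncard_preimage_inl_add_ncard_preimage_inr {α β : Type*} [Finite α] [Finite β]
    (S : Set (α ⊕ β)) : S.ncard = (Sum.inl ⁻¹' S).ncard + (Sum.inr ⁻¹' S).ncard := by
  conv_lhs => rw [← Set.image_preimage_inl_union_image_preimage_inr S]
  rw [Set.ncard_union_eq (Set.disjoint_image_inl_image_inr),
    Set.ncard_image_of_injective _ Sum.inl_injective,
    Set.ncard_image_of_injective _ Sum.inr_injective]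

namespace Multigraph

variable {r m k : ℕ} {A B : Multigraph} {x : Fin r → A.V} {y : Fin r → B.V}

theorem delta_join (S : Set (A.V ⊕ B.V)) :
    (join A B x y).delta S = A.delta (Sum.inl ⁻¹' S) + B.delta (Sum.inr ⁻¹' S) +
      {t | ¬(Sum.inl (x t) ∈ S ↔ Sum.inr (y t) ∈ S)}.ncard := by
  have h := ncard_eq_ncard_preimage_inl_add_ncard_preimage_inr
    (α := A.E ⊕ B.E) ((join A B x y).cutEdges S)
  rw [ncard_eq_ncard_preimage_inl_add_ncard_preimage_inr] at h
  exact h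

theorem delta_join_range_inl : (join A B x y).delta (Set.range Sum.inl) = r := by
  refine (delta_join (Set.range Sum.inl)).trans ?_
  simp [delta]

section lexPrefix

variable {β : Type*} [LinearOrder β] {T : A.V ⊕ B.V → β} {ρ : A.V ⊕ B.V → ℕ}

theorem delta_join_lexPrefix_inl (hne : ∀ u v, T (Sum.inl u) ≠ T (Sum.inr v)) (v : A.V) :
    (join A B x y).delta (lexPrefix T ρ (Sum.inl v)) =
      A.delta (lexPrefix (T ∘ Sum.inl) (ρ ∘ Sum.inl) v) +
        B.delta {w | T (Sum.inr w) < T (Sum.inl v)} +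
        {t | ¬(x t ∈ lexPrefix (T ∘ Sum.inl) (ρ ∘ Sum.inl) v ↔
          T (Sum.inr (y t)) < T (Sum.inl v))}.ncard := by
  refine (delta_join (lexPrefix T ρ (Sum.inl v))).trans ?_
  simp [lexPrefix, (hne _ _).symm]

theorem delta_join_lexPrefix_inr (hne : ∀ u v, T (Sum.inl u) ≠ T (Sum.inr v)) (v : B.V) :
    (join A B x y).delta (lexPrefix T ρ (Sum.inr v)) =
      B.delta (lexPrefix (T ∘ Sum.inr) (ρ ∘ Sum.inr) v) +
        A.delta {w | T (Sum.inl w) < T (Sum.inr v)} +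
        {t | ¬(y t ∈ lexPrefix (T ∘ Sum.inr) (ρ ∘ Sum.inr) v ↔
          T (Sum.inl (x t)) < T (Sum.inr v))}.ncard := by
  refine (delta_join (lexPrefix T ρ (Sum.inr v))).trans ?_
  rw [add_comm (A.delta _)]
  simp [lexPrefix, hne, iff_comm]

end lexPrefix

/-- What one side of a join needs to know about the other side, for a layout of width at most `k`
of the join in `m` blocks alternating between the sides: `pos s t` is the block of the endpoint on
side `s` of the `t`-th joining edge, and `cut s j` is the number of edges inside side `s` that
cross the cut before block `j`. The two sides are `false` and `true`. -/
structure Interface (r m k : ℕ) where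
  pos : Bool → Fin r → Fin m
  cut : Bool → Fin m → Fin (k + 1)

namespace Interface

/-- An interface is a pair of functions; used to count interfaces. -/
def equivProd (r m k : ℕ) :
    Interface r m k ≃ (Bool → Fin r → Fin m) × (Bool → Fin m → Fin (k + 1)) where
  toFun I := (I.pos, I.cut)
  invFun p := ⟨p.1, p.2⟩
  left_inv _ := rfl
  right_inv _ := rfl

instance : Finite (Interface r m k) :=
  Finite.of_equiv _ (equivProd r m k).symm

theorem card_eq (r m k : ℕ) :
    Nat.card (Interface r m k) = m ^ (2 * r) * (k + 1) ^ (2 * m) := by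
  rw [Nat.card_congr (equivProd r m k)]
  simp [Nat.card_eq_fintype_card, pow_mul, mul_comm 2]

end Interface

/-- The graph `G` with boundary `x` can be arranged as side `s` of a layout with interface `I`.
Blocks alternate between the sides: those of side `false` have even index. -/
def Realizes (s : Bool) (G : Multigraph) (x : Fin r → G.V) (I : Interface r m k) : Prop :=
  ∃ (ρ : G.V → ℕ) (T : G.V → Fin m), Function.Injective ρ ∧
    (∀ v, (T v : ℕ) % 2 = s.toNat) ∧ (∀ t, T (x t) = I.pos s t) ∧
    (∀ j, G.delta {v | T v < j} = I.cut s j) ∧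
    ∀ v, G.delta (lexPrefix T ρ v) + I.cut (!s) (T v) +
      {t | ¬(x t ∈ lexPrefix T ρ v ↔ I.pos (!s) t < T v)}.ncard ≤ k

theorem cutwidth_join_le_of_realizes {I : Interface r m k} (hA : Realizes false A x I)
    (hB : Realizes true B y I) : (join A B x y).cutwidth ≤ k := by
  obtain ⟨ρA, TA, hρA, hparA, hposA, hcutA, hA⟩ := hA
  obtain ⟨ρB, TB, hρB, hparB, hposB, hcutB, hB⟩ := hB
  have hne (u v) : TA u ≠ TB v := fun h => by simpa [h, hparB] using hparA u
  refine (isLayout_toLex (T := Sum.elim TA TB) (ρ := Sum.elim ρA ρB) ?_ ?_).cutwidth_le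
  · rintro (u | u) (v | v) hT hρ
    · exact congrArg _ (hρA hρ)
    · exact absurd hT (hne u v)
    · exact absurd hT.symm (hne v u)
    · exact congrArg _ (hρB hρ)
  · rintro (v | v)
    · refine (delta_join_lexPrefix_inl hne v).trans_le ?_
      simpa [hcutB, hposB] using hA v
    · refine (delta_join_lexPrefix_inr hne v).trans_le ?_
      simpa [hcutA, hposA] using hB v

theorem exists_realizes_of_cutwidth_join_le (hm : (r + 1) * (2 * k + 2) ≤ m)
    (h : (join A B x y).cutwidth ≤ k) :
    ∃ I : Interface r m k, Realizes false A x I ∧ Realizes true B y I := by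
  obtain ⟨ρ, T, hρ, hpar, hk⟩ := exists_alternating_blocks h (Set.range Sum.inl)
    (hm.trans_eq' (by rw [delta_join_range_inl]))
  have hcut (j : Fin m) :
      A.delta {v | T (Sum.inl v) < j} + B.delta {v | T (Sum.inr v) < j} ≤ k :=
    (Nat.le_add_right _ _).trans <| (delta_join {v | T v < j}).symm.trans_le <|
      delta_lt_le_of_lexPrefix (fun _ _ _ huv => hρ huv) hk j
  have hparA (v) : (T (Sum.inl v) : ℕ) % 2 = 0 := (hpar (Sum.inl v)).2 ⟨v, rfl⟩
  have hparB (v) : (T (Sum.inr v) : ℕ) % 2 = 1 :=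
    Nat.mod_two_ne_zero.1 <| mt (hpar (Sum.inr v)).1 fun ⟨_, h⟩ => Sum.inl_ne_inr h
  have hne (u v) : T (Sum.inl u) ≠ T (Sum.inr v) := fun h => by
    simpa [h, hparB] using hparA u
  let I : Interface r m k :=
    { pos := fun s t => bif s then T (Sum.inr (y t)) else T (Sum.inl (x t))
      cut := fun s j => bif s then ⟨B.delta {v | T (Sum.inr v) < j}, by have := hcut j; omega⟩
        else ⟨A.delta {v | T (Sum.inl v) < j}, by have := hcut j; omega⟩ }
  exact ⟨I,
    ⟨ρ ∘ Sum.inl, T ∘ Sum.inl, hρ.comp Sum.inl_injective, hparA, fun _ => rfl, fun _ => rfl,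
      fun v => (delta_join_lexPrefix_inl hne v).symm.trans_le (hk _)⟩,
    ⟨ρ ∘ Sum.inr, T ∘ Sum.inr, hρ.comp Sum.inr_injective, hparB, fun _ => rfl, fun _ => rfl,
      fun v => (delta_join_lexPrefix_inr hne v).symm.trans_le (hk _)⟩⟩

end Multigraph

/-! ## Linkages between nested cuts of equal size -/

theorem exists_enumeration_extending {α : Type*} {r : ℕ} {F : Set α} (hF : F.ncard = r)
    (hfin : F.Finite) {f : Fin r → α} (hf : Function.Injective f) :
    ∃ g : Fin r → α, Function.Injective g ∧ Set.range g = F ∧ ∀ t, f t ∈ F → g t = f t := by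
  classical
  have hcard : Fintype.card (Fin r) = hfin.toFinset.card := by
    rw [Fintype.card_fin, ← hF, Set.ncard_eq_toFinset_card F hfin]
  obtain ⟨g, hg⟩ := Set.MapsTo.exists_equiv_extend_of_card_eq hcard
    (s := {t | f t ∈ F}) (fun t ht => by simpa using ht) hf.injOn
  refine ⟨fun t => g t, Subtype.val_injective.comp g.injective, ?_, hg⟩
  rw [← Function.comp_def, g.surjective.range_comp]
  simp

namespace Multigraph

namespace Walk

variable {G : Multigraph}

/-- Concatenation of walks. -/
def append : ∀ {u v w : G.V}, G.Walk u v → G.Walk v w → G.Walk u w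
  | _, _, _, .nil _, q => q
  | _, _, _, .cons e h p, q => .cons e h (p.append q)

theorem edges_append : ∀ {u v w : G.V} (p : G.Walk u v) (q : G.Walk v w),
    (p.append q).edges = p.edges ++ q.edges
  | _, _, _, .nil _, _ => rfl
  | _, _, _, .cons e _ p, q => congrArg (e :: ·) (edges_append p q)

theorem support_append : ∀ {u v w : G.V} (p : G.Walk u v) (q : G.Walk v w),
    (p.append q).support = p.support ++ q.support.tail
  | _, _, _, .nil _, .nil _ => rfl
  | _, _, _, .nil _, .cons _ _ _ => rfl
  | u, _, _, .cons _ _ p, q => congrArg (u :: ·) (support_append p q)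

theorem support_eq_cons : ∀ {u v : G.V} (p : G.Walk u v), p.support = u :: p.support.tail
  | _, _, .nil _ => rfl
  | _, _, .cons _ _ _ => rfl

theorem support_tail_append {u v w : G.V} (p : G.Walk u v) (q : G.Walk v w) :
    (p.append q).support.tail = p.support.tail ++ q.support.tail := by
  rw [support_append, support_eq_cons p, List.cons_append, List.tail_cons, List.tail_cons]

/-- A walk avoiding the edges in `F`, as a walk of the whole graph. -/
def ofDeleteEdges {F : Set G.E} : ∀ {u v : G.V}, (G.deleteEdges F).Walk u v → G.Walk u v
  | u, _, .nil _ => Walk.nil (G := G) u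
  | _, _, .cons e h p => .cons e.1 h (ofDeleteEdges p)

theorem edges_ofDeleteEdges {F : Set G.E} : ∀ {u v : G.V} (p : (G.deleteEdges F).Walk u v),
    p.ofDeleteEdges.edges = p.edges.map Subtype.val
  | _, _, .nil _ => rfl
  | _, _, .cons e _ p => congrArg (e.1 :: ·) (edges_ofDeleteEdges p)

theorem support_ofDeleteEdges {F : Set G.E} : ∀ {u v : G.V} (p : (G.deleteEdges F).Walk u v),
    p.ofDeleteEdges.support = p.support
  | _, _, .nil _ => rfl
  | u, _, .cons _ _ p => congrArg (u :: ·) (support_ofDeleteEdges p)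

theorem exists_edge_mem_cutEdges {S : Set G.V} : ∀ {u v : G.V} (p : G.Walk u v),
    ¬(u ∈ S ↔ v ∈ S) → ∃ e ∈ p.edges, e ∈ G.cutEdges S
  | _, _, .nil _, h => absurd Iff.rfl h
  | u, w, .cons (v := v) e he p, h => by
    by_cases huv : u ∈ S ↔ v ∈ S
    · obtain ⟨f, hf, hfS⟩ := exists_edge_mem_cutEdges p fun hvw => h (huv.trans hvw)
      exact ⟨f, List.mem_cons_of_mem _ hf, hfS⟩
    · refine ⟨e, List.mem_cons_self, ?_⟩
      obtain he | he := he <;> rw [mem_cutEdges, he] <;> tauto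

end Walk

variable {G : Multigraph} {P P' P'' : Set G.V} {r : ℕ}

open Classical in
/-- The endpoint in `P` of an edge with exactly one endpoint in `P`. -/
noncomputable def innerEnd (G : Multigraph) (P : Set G.V) (e : G.E) : G.V :=
  if (G.ends e).1 ∈ P then (G.ends e).1 else (G.ends e).2

open Classical in
/-- The endpoint outside `P` of an edge with exactly one endpoint in `P`. -/
noncomputable def outerEnd (G : Multigraph) (P : Set G.V) (e : G.E) : G.V :=
  if (G.ends e).1 ∈ P then (G.ends e).2 else (G.ends e).1

theorem innerEnd_mem {e : G.E} (he : e ∈ G.cutEdges P) : G.innerEnd P e ∈ P := by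
  rw [mem_cutEdges] at he
  unfold innerEnd
  split_ifs <;> tauto

theorem outerEnd_notMem {e : G.E} (he : e ∈ G.cutEdges P) : G.outerEnd P e ∉ P := by
  rw [mem_cutEdges] at he
  unfold outerEnd
  split_ifs <;> tauto

theorem ends_eq_or (P : Set G.V) (e : G.E) :
    G.ends e = (G.innerEnd P e, G.outerEnd P e) ∨
      G.ends e = (G.outerEnd P e, G.innerEnd P e) := by
  unfold innerEnd outerEnd
  split_ifs
  exacts [.inl rfl, .inr rfl]

theorem innerEnd_eq_of_subset (h : P ⊆ P') {e : G.E} (he : e ∈ G.cutEdges P)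
    (he' : e ∈ G.cutEdges P') : G.innerEnd P' e = G.innerEnd P e := by
  rw [mem_cutEdges] at he he'
  have h₁ := @h (G.ends e).1
  have h₂ := @h (G.ends e).2
  unfold innerEnd
  split_ifs <;> tauto

/-- The edges of `G` with both endpoints in `P`. -/
def edgesWithin (G : Multigraph) (P : Set G.V) : Set G.E :=
  {e | (G.ends e).1 ∈ P ∧ (G.ends e).2 ∈ P}

theorem edgesWithin_mono (h : P ⊆ P') : G.edgesWithin P ⊆ G.edgesWithin P' :=
  fun _ he => ⟨h he.1, h he.2⟩

/-- `e` lists the edges crossing `P` without repetition. -/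
structure IsCutEnumeration (G : Multigraph) (P : Set G.V) (e : Fin r → G.E) : Prop where
  injective : Function.Injective e
  range_eq : Set.range e = G.cutEdges P

namespace IsCutEnumeration

variable {e : Fin r → G.E}

theorem mem (he : G.IsCutEnumeration P e) (t : Fin r) : e t ∈ G.cutEdges P :=
  he.range_eq ▸ Set.mem_range_self t

theorem delta_eq (he : G.IsCutEnumeration P e) : G.delta P = r := by
  rw [← ncard_cutEdges, ← he.range_eq, Set.ncard_range_of_injective he.injective, Nat.card_fin]

end IsCutEnumeration

theorem exists_isCutEnumeration (hP : G.delta P = r) :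
    ∃ e : Fin r → G.E, G.IsCutEnumeration P e := by
  let φ : G.cutEdges P ≃ Fin r := Finite.equivFinOfCardEq hP
  exact ⟨fun t => φ.symm t, Subtype.val_injective.comp φ.symm.injective,
    (φ.symm.surjective.range_comp _).trans Subtype.range_val⟩

/-- Edge-disjoint walks continuing the `t`-th edge `e t` of the cut `P` to the `t`-th edge `e' t`
of a larger cut `P'`. The `t`-th walk starts at the end of `e t` in `P`, stays in `P' \ P` from
then on and stops at the end of `e' t` in `P'`; it is trivial when `e t = e' t`. -/
structure CutLinkage (G : Multigraph) (P P' : Set G.V) (e e' : Fin r → G.E) where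
  walk : ∀ t, G.Walk (G.innerEnd P (e t)) (G.innerEnd P' (e' t))
  nodup : ∀ t, (walk t).support.tail.Nodup
  support_tail : ∀ t, ∀ x ∈ (walk t).support.tail, x ∈ P' \ P
  edges : ∀ t, ∀ f ∈ (walk t).edges, f ∈ G.edgesWithin P' \ G.edgesWithin P
  disjoint : ∀ s t, s ≠ t → ∀ f ∈ (walk s).edges, f ∉ (walk t).edges

namespace CutLinkage

variable {e e' e'' : Fin r → G.E}

/-- The trivial linkage from a cut to itself. -/
noncomputable def refl (P : Set G.V) (e : Fin r → G.E) : G.CutLinkage P P e e where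
  walk _ := .nil _
  nodup _ := List.nodup_nil
  support_tail _ _ h := absurd h List.not_mem_nil
  edges _ _ h := absurd h List.not_mem_nil
  disjoint _ _ _ _ h := absurd h List.not_mem_nil

/-- Linkages between consecutive cuts can be concatenated. -/
noncomputable def trans (L : G.CutLinkage P P' e e') (L' : G.CutLinkage P' P'' e' e'') (h : P ⊆ P')
    (h' : P' ⊆ P'') : G.CutLinkage P P'' e e'' where
  walk t := (L.walk t).append (L'.walk t)
  nodup t := by
    rw [Walk.support_tail_append]
    exact (L.nodup t).append (L'.nodup t) fun x hx hx' =>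
      (L'.support_tail t x hx').2 (L.support_tail t x hx).1
  support_tail t x hx := by
    rw [Walk.support_tail_append, List.mem_append] at hx
    exact hx.elim (fun hx => ⟨h' (L.support_tail t x hx).1, (L.support_tail t x hx).2⟩)
      fun hx => ⟨(L'.support_tail t x hx).1, fun hxP => (L'.support_tail t x hx).2 (h hxP)⟩
  edges t f hf := by
    rw [Walk.edges_append, List.mem_append] at hf
    exact hf.elim
      (fun hf => ⟨edgesWithin_mono h' (L.edges t f hf).1, (L.edges t f hf).2⟩)
      fun hf => ⟨(L'.edges t f hf).1, fun hfP => (L'.edges t f hf).2 (edgesWithin_mono h hfP)⟩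
  disjoint s t hst f hf hf' := by
    rw [Walk.edges_append, List.mem_append] at hf hf'
    obtain hf | hf := hf <;> obtain hf' | hf' := hf'
    · exact L.disjoint s t hst f hf hf'
    · exact (L'.edges t f hf').2 (L.edges s f hf).1
    · exact (L'.edges s f hf).2 (L.edges t f hf').1
    · exact L'.disjoint s t hst f hf hf'

/-- A linkage avoiding the edges in `F`, as a linkage of the whole graph. -/
noncomputable def ofDeleteEdges {F : Set G.E} {e e' : Fin r → (G.deleteEdges F).E}
    (L : (G.deleteEdges F).CutLinkage P P' e e') :
    G.CutLinkage P P' (fun t => (e t).1) (fun t => (e' t).1) where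
  walk t := (L.walk t).ofDeleteEdges
  nodup t := (Walk.support_ofDeleteEdges (L.walk t)).symm ▸ L.nodup t
  support_tail t := (Walk.support_ofDeleteEdges (L.walk t)).symm ▸ L.support_tail t
  edges t f hf := by
    obtain ⟨g, hg, rfl⟩ := List.mem_map.mp (Walk.edges_ofDeleteEdges (L.walk t) ▸ hf)
    exact L.edges t g hg
  disjoint s t hst f hf hf' := by
    obtain ⟨g, hg, rfl⟩ := List.mem_map.mp (Walk.edges_ofDeleteEdges (L.walk s) ▸ hf)
    obtain ⟨g', hg', hgg'⟩ := List.mem_map.mp (Walk.edges_ofDeleteEdges (L.walk t) ▸ hf')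
    exact L.disjoint s t hst g hg (Subtype.ext hgg' ▸ hg')

end CutLinkage

theorem outerEnd_eq_of_notMem_cutEdges_insert {v : G.V} {e : G.E} (he : e ∈ G.cutEdges P)
    (hev : e ∉ G.cutEdges (insert v P)) : G.outerEnd P e = v := by
  rw [mem_cutEdges] at *
  rw [Set.mem_insert_iff, Set.mem_insert_iff] at hev
  unfold outerEnd
  split_ifs <;> tauto

theorem innerEnd_insert_eq_of_notMem_cutEdges {v : G.V} {e : G.E}
    (he : e ∉ G.cutEdges P) (hev : e ∈ G.cutEdges (insert v P)) :
    G.innerEnd (insert v P) e = v := by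
  rw [mem_cutEdges] at *
  rw [Set.mem_insert_iff, Set.mem_insert_iff] at hev
  unfold innerEnd
  split_ifs with h <;> rw [Set.mem_insert_iff] at h <;> tauto

theorem exists_walk_of_mem_cutEdges_insert {v : G.V} (hv : v ∉ P) {e e' : G.E}
    (he : e ∈ G.cutEdges P) (he' : e' ∈ G.cutEdges (insert v P))
    (hmem : e ∈ G.cutEdges (insert v P) → e' = e) (hmem' : e' ∈ G.cutEdges P → e' = e) :
    ∃ p : G.Walk (G.innerEnd P e) (G.innerEnd (insert v P) e'),
      p.support.tail.Nodup ∧ (∀ x ∈ p.support.tail, x ∈ insert v P \ P) ∧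
      ∀ f ∈ p.edges, f = e ∧ f ∈ G.edgesWithin (insert v P) \ G.edgesWithin P := by
  by_cases hev : e ∈ G.cutEdges (insert v P)
  · obtain rfl := hmem hev
    rw [innerEnd_eq_of_subset (Set.subset_insert v P) he he']
    exact ⟨.nil _, List.nodup_nil, fun _ h => absurd h List.not_mem_nil,
      fun _ h => absurd h List.not_mem_nil⟩
  · have he'P : e' ∉ G.cutEdges P := fun h => hev (hmem' h ▸ he')
    have hout := outerEnd_eq_of_notMem_cutEdges_insert he hev
    rw [innerEnd_insert_eq_of_notMem_cutEdges he'P he']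
    refine ⟨.cons e (hout ▸ ends_eq_or P e) (.nil v), ?_, ?_, ?_⟩
    · exact List.nodup_singleton v
    · rintro x hx
      obtain rfl := List.mem_singleton.mp hx
      exact ⟨Set.mem_insert _ _, hv⟩
    · rintro f hf
      obtain rfl := List.mem_singleton.mp hf
      rw [mem_cutEdges] at he hev
      exact ⟨rfl, by simp only [edgesWithin, Set.mem_sdiff, Set.mem_ofPred_eq]; grind⟩

theorem exists_cutLinkage_insert {v : G.V} (hv : v ∉ P) {e : Fin r → G.E}
    (he : G.IsCutEnumeration P e) (hr : G.delta (insert v P) = r) :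
    ∃ e' : Fin r → G.E, G.IsCutEnumeration (insert v P) e' ∧
      Nonempty (G.CutLinkage P (insert v P) e e') := by
  obtain ⟨e', hinj, hrange, hfix⟩ :=
    exists_enumeration_extending hr (Set.toFinite _) he.injective
  have he' : G.IsCutEnumeration (insert v P) e' := ⟨hinj, hrange⟩
  have hback (t : Fin r) (ht : e' t ∈ G.cutEdges P) : e' t = e t := by
    obtain ⟨s, hs⟩ := he.range_eq ▸ ht
    have hst : e' s = e' t := (hfix s (hs ▸ he'.mem t)).trans hs
    rw [← hs, hinj hst]
  choose p hnodup hsupp hedges using fun t =>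
    exists_walk_of_mem_cutEdges_insert hv (he.mem t) (he'.mem t) (hfix t) (hback t)
  refine ⟨e', he', ⟨p, hnodup, hsupp, fun t f hf => (hedges t f hf).2, ?_⟩⟩
  exact fun s t hst f hf hf' =>
    hst (he.injective ((hedges s f hf).1.symm.trans (hedges t f hf').1))

theorem exists_mem_edgesWithin_sdiff (hPP' : P ⊆ P') {v : G.V} (hv : v ∈ P' \ P)
    (hP : G.delta P < G.delta (insert v P)) (hP' : G.delta P' ≤ G.delta (P' \ {v})) :
    (G.edgesWithin (P' \ P)).Nonempty := by
  by_contra! h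
  have hno (f : G.E) : ¬((G.ends f).1 ∈ P' \ P ∧ (G.ends f).2 ∈ P' \ P) :=
    Set.eq_empty_iff_forall_notMem.mp h f
  have hinter : insert v P ∩ (P' \ {v}) = P := by grind
  have hunion : insert v P ∪ (P' \ {v}) = P' := by grind
  have := delta_add_delta_le_of_no_edge (G := G) (S := insert v P) (R := P' \ {v})
    fun f => by have := hno f; grind
  rw [hinter, hunion] at this
  omega

theorem isCutEnumeration_deleteEdges_iff {F : Set G.E} (hF : Disjoint (G.cutEdges P) F)
    {e : Fin r → (G.deleteEdges F).E} :
    (G.deleteEdges F).IsCutEnumeration P e ↔ G.IsCutEnumeration P (fun t => (e t).1) := by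
  have hsub : G.cutEdges P ⊆ Set.range (Subtype.val : (G.deleteEdges F).E → G.E) :=
    fun f hf => ⟨⟨f, hF.notMem_of_mem_left hf⟩, rfl⟩
  refine ⟨fun h => ⟨Subtype.val_injective.comp h.injective, ?_⟩,
    fun h => ⟨h.injective.of_comp (f := Subtype.val), ?_⟩⟩
  · exact (Set.range_comp Subtype.val e).trans
      ((congrArg _ h.range_eq).trans (Set.image_preimage_eq_of_subset hsub))
  · refine Set.image_injective.mpr Subtype.val_injective ?_
    exact (Set.range_comp Subtype.val e).symm.trans
      (h.range_eq.trans (Set.image_preimage_eq_of_subset hsub).symm)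

theorem delta_deleteEdges_of_disjoint {F : Set G.E} (hF : Disjoint (G.cutEdges P) F) :
    (G.deleteEdges F).delta P = G.delta P := by
  rw [delta_deleteEdges, hF.sdiff_eq_left, ncard_cutEdges]

theorem disjoint_cutEdges_singleton {f : G.E} (hf : f ∈ G.edgesWithin (P' \ P)) :
    Disjoint (G.cutEdges P) {f} ∧ Disjoint (G.cutEdges P') {f} := by
  simp only [Set.disjoint_singleton_right, mem_cutEdges]
  exact ⟨not_not.mpr (iff_of_false hf.1.2 hf.2.2), not_not.mpr (iff_of_true hf.1.1 hf.2.1)⟩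

theorem le_delta_deleteEdges_singleton {f : G.E} (hf : f ∈ G.edgesWithin (P' \ P))
    (hP : r ≤ G.delta P) (hP' : r ≤ G.delta P') (hr : ∀ S, P ⊂ S → S ⊂ P' → r < G.delta S)
    {S : Set G.V} (hPS : P ⊆ S) (hSP' : S ⊆ P') : r ≤ (G.deleteEdges {f}).delta S := by
  obtain ⟨hdisj, hdisj'⟩ := disjoint_cutEdges_singleton hf
  obtain rfl | hneP := eq_or_ne P S
  · exact hP.trans_eq (delta_deleteEdges_of_disjoint hdisj).symm
  obtain rfl | hneP' := eq_or_ne S P'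
  · exact hP'.trans_eq (delta_deleteEdges_of_disjoint hdisj').symm
  have hlt := hr S (hPS.ssubset_of_ne hneP) (hSP'.ssubset_of_ne hneP')
  have hle := delta_le_delta_deleteEdges_add_ncard {f} S
  rw [Set.ncard_singleton] at hle
  omega

/-- A form of Menger's theorem, by induction: split at an intermediate cut of size `r` if there is
one; otherwise deleting an edge inside `P' \ P` keeps all intermediate cuts of size at least `r`. -/
theorem exists_cutLinkage (hPP' : P ⊆ P') {e : Fin r → G.E} (he : G.IsCutEnumeration P e)
    (hP' : G.delta P' = r) (hr : ∀ S, P ⊆ S → S ⊆ P' → r ≤ G.delta S) :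
    ∃ e' : Fin r → G.E, G.IsCutEnumeration P' e' ∧ Nonempty (G.CutLinkage P P' e e') := by
  induction hn : Nat.card G.E + (P'.ncard - P.ncard) using Nat.strong_induction_on
    generalizing G P P' with
  | _ n ih =>
    obtain rfl | hne := eq_or_ne P P'
    · exact ⟨e, he, ⟨.refl P e⟩⟩
    by_cases htight : ∃ S, P ⊂ S ∧ S ⊂ P' ∧ G.delta S = r
    · obtain ⟨S, hPS, hSP', hS⟩ := htight
      have hlt := Set.ncard_lt_ncard hPS
      have hlt' := Set.ncard_lt_ncard hSP'
      obtain ⟨e₁, he₁, ⟨L₁⟩⟩ := ih _ (by omega) hPS.subset he hS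
        (fun T hT hTS => hr T hT (hTS.trans hSP'.subset)) rfl
      obtain ⟨e₂, he₂, ⟨L₂⟩⟩ := ih _ (by omega) hSP'.subset he₁ hP'
        (fun T hT => hr T (hPS.subset.trans hT)) rfl
      exact ⟨e₂, he₂, ⟨L₁.trans L₂ hPS.subset hSP'.subset⟩⟩
    have hlt (S : Set G.V) (hPS : P ⊂ S) (hSP' : S ⊂ P') : r < G.delta S :=
      (hr S hPS.subset hSP'.subset).lt_of_ne fun h => htight ⟨S, hPS, hSP', h.symm⟩
    obtain ⟨v, hvP', hvP⟩ := Set.exists_of_ssubset (hPP'.ssubset_of_ne hne)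
    have hinsert : insert v P ⊆ P' := Set.insert_subset hvP' hPP'
    obtain rfl | hne' := eq_or_ne (insert v P) P'
    · exact exists_cutLinkage_insert hvP he hP'
    obtain ⟨f, hf⟩ := exists_mem_edgesWithin_sdiff hPP' ⟨hvP', hvP⟩
      (he.delta_eq ▸ hlt _ (Set.ssubset_insert hvP) (hinsert.ssubset_of_ne hne'))
      (hP' ▸ hr _ (by grind) Set.sdiff_subset)
    obtain ⟨hdisj, hdisj'⟩ := disjoint_cutEdges_singleton hf
    have hcard : Nat.card (G.deleteEdges {f}).E < Nat.card G.E :=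
      Finite.card_subtype_lt (x := f) (not_not.mpr rfl)
    obtain ⟨e', he', ⟨L⟩⟩ := ih _ ((Nat.add_lt_add_right hcard _).trans_eq hn)
      (G := G.deleteEdges {f}) (e := fun t => ⟨e t, hdisj.notMem_of_mem_left (he.mem t)⟩)
      hPP' ((isCutEnumeration_deleteEdges_iff hdisj).mpr he)
      ((delta_deleteEdges_of_disjoint hdisj').trans hP')
      (fun _ => le_delta_deleteEdges_singleton hf he.delta_eq.ge hP'.ge hlt) rfl
    exact ⟨_, (isCutEnumeration_deleteEdges_iff hdisj').mp he', ⟨L.ofDeleteEdges⟩⟩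

theorem exists_linked_cutEnumerations {P : ℕ → Set G.V} (hmono : Monotone P)
    (hP : ∀ i, G.delta (P i) = r)
    (hr : ∀ i S, P i ⊆ S → S ⊆ P (i + 1) → r ≤ G.delta S) :
    ∃ e : ℕ → Fin r → G.E, (∀ i, G.IsCutEnumeration (P i) (e i)) ∧
      ∀ i j, i ≤ j → Nonempty (G.CutLinkage (P i) (P j) (e i) (e j)) := by
  have hstep (i : ℕ) (e : {e : Fin r → G.E // G.IsCutEnumeration (P i) e}) :
      ∃ e' : {e : Fin r → G.E // G.IsCutEnumeration (P (i + 1)) e},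
        Nonempty (G.CutLinkage (P i) (P (i + 1)) e.1 e'.1) := by
    obtain ⟨e', he', hL⟩ := exists_cutLinkage (hmono i.le_succ) e.2 (hP (i + 1)) (hr i)
    exact ⟨⟨e', he'⟩, hL⟩
  choose next hnext using hstep
  obtain ⟨e₀, he₀⟩ := exists_isCutEnumeration (hP 0)
  let e (i : ℕ) : {e : Fin r → G.E // G.IsCutEnumeration (P i) e} := Nat.rec ⟨e₀, he₀⟩ next i
  refine ⟨fun i => (e i).1, fun i => (e i).2, fun i j hij => ?_⟩
  induction j, hij using Nat.le_induction with
  | base => exact ⟨.refl _ _⟩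
  | succ j hij ih =>
    obtain ⟨L⟩ := ih
    obtain ⟨L'⟩ := hnext j (e j)
    exact ⟨L.trans L' (hmono hij) (hmono j.le_succ)⟩

end Multigraph

/-! ## Splicing along a linkage -/

namespace Multigraph

section join

variable {A A' B : Multigraph} {r : ℕ} {x : Fin r → A.V} {x' : Fin r → A'.V} {y : Fin r → B.V}

theorem cutwidth_join_le_cutwidth_join (φ : A.V → A'.V) (hφ : Function.Injective φ)
    (h : ∀ S, A.delta (φ ⁻¹' S) + {t | ¬(φ (x t) ∈ S ↔ x' t ∈ S)}.ncard ≤ A'.delta S) :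
    (join A B x y).cutwidth ≤ (join A' B x' y).cutwidth := by
  refine cutwidth_le_cutwidth_of_delta_preimage_le (G := join A B x y) (H := join A' B x' y)
    (Sum.map φ id) (hφ.sumMap Function.injective_id) fun S => ?_
  refine (delta_join (Sum.map φ id ⁻¹' S)).trans_le (le_of_le_of_eq ?_ (delta_join S).symm)
  let D : Set (Fin r) := {t | ¬(Sum.inl (φ (x t)) ∈ S ↔ Sum.inr (y t) ∈ S)}
  let M : Set (Fin r) := {t | ¬(φ (x t) ∈ Sum.inl ⁻¹' S ↔ x' t ∈ Sum.inl ⁻¹' S)}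
  let D' : Set (Fin r) := {t | ¬(Sum.inl (x' t) ∈ S ↔ Sum.inr (y t) ∈ S)}
  have hD : D ⊆ M ∪ D' := fun t => by
    simp only [D, M, D', Set.mem_union, Set.mem_ofPred_eq]
    tauto
  have hcard : D.ncard ≤ M.ncard + D'.ncard :=
    (Set.ncard_le_ncard hD).trans (Set.ncard_union_le M D')
  have hM : A.delta (φ ⁻¹' (Sum.inl ⁻¹' S)) + M.ncard ≤ A'.delta (Sum.inl ⁻¹' S) := h _
  change A.delta (φ ⁻¹' (Sum.inl ⁻¹' S)) + B.delta (Sum.inr ⁻¹' S) + D.ncard ≤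
    A'.delta (Sum.inl ⁻¹' S) + B.delta (Sum.inr ⁻¹' S) + D'.ncard
  omega

end join

variable {G : Multigraph} {P P' : Set G.V} {r : ℕ} {e e' : Fin r → G.E}

theorem delta_induce (P S : Set G.V) :
    (G.induce P).delta (Subtype.val ⁻¹' S) = (G.cutEdges S ∩ G.edgesWithin P).ncard :=
  (Set.ncard_image_of_injective _ Subtype.val_injective).symm.trans <| congrArg Set.ncard <|
    (Subtype.image_preimage_coe (G.edgesWithin P) (G.cutEdges S)).trans (Set.inter_comm _ _)

namespace IsCutEnumeration

/-- The endpoints in `P` of the enumerated edges. -/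
noncomputable def inner (he : G.IsCutEnumeration P e) (t : Fin r) : (G.induce P).V :=
  ⟨G.innerEnd P (e t), innerEnd_mem (he.mem t)⟩

/-- The endpoints outside `P` of the enumerated edges. -/
noncomputable def outer (he : G.IsCutEnumeration P e) (t : Fin r) : (G.induce Pᶜ).V :=
  ⟨G.outerEnd P (e t), outerEnd_notMem (he.mem t)⟩

/-- The part of `G` inside `P` glued to the part outside `P'`, matching the cuts of `P` and `P'`
along their enumerations. -/
noncomputable def splice (he : G.IsCutEnumeration P e) (he' : G.IsCutEnumeration P' e') :
    Multigraph :=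
  join (G.induce P) (G.induce P'ᶜ) he.inner he'.outer

theorem delta_le (he : G.IsCutEnumeration P e) (S : Set G.V) :
    G.delta S ≤ (G.cutEdges S ∩ G.edgesWithin P).ncard + (G.cutEdges S ∩ G.edgesWithin Pᶜ).ncard +
      {t | ¬(G.innerEnd P (e t) ∈ S ↔ G.outerEnd P (e t) ∈ S)}.ncard := by
  have hsub : G.cutEdges S ⊆ (G.cutEdges S ∩ G.edgesWithin P ∪ G.cutEdges S ∩ G.edgesWithin Pᶜ) ∪
      e '' {t | ¬(G.innerEnd P (e t) ∈ S ↔ G.outerEnd P (e t) ∈ S)} := by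
    intro f hf
    by_cases hfP : f ∈ G.cutEdges P
    · obtain ⟨t, rfl⟩ := he.range_eq ▸ hfP
      refine .inr ⟨t, ?_, rfl⟩
      obtain h | h := ends_eq_or P (e t) <;> rw [mem_cutEdges, h] at hf
      exacts [hf, fun hiff => hf hiff.symm]
    · rw [mem_cutEdges, not_not] at hfP
      by_cases h : (G.ends f).1 ∈ P
      · exact .inl (.inl ⟨hf, h, hfP.1 h⟩)
      · exact .inl (.inr ⟨hf, h, fun h' => h (hfP.2 h')⟩)
  refine (Set.ncard_le_ncard hsub).trans <| (Set.ncard_union_le _ _).trans ?_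
  exact Nat.add_le_add (Set.ncard_union_le _ _) (Set.ncard_image_le (Set.toFinite _))

theorem cutwidth_le_cutwidth_splice_self (he : G.IsCutEnumeration P e) :
    G.cutwidth ≤ (he.splice he).cutwidth := by
  classical
  let ψ : P ⊕ (Pᶜ : Set G.V) ≃ G.V := Equiv.Set.sumCompl P
  have hψ (X : Set G.V) : G.delta X ≤ (he.splice he).delta (ψ ⁻¹' X) := by
    refine (he.delta_le X).trans_eq ?_
    rw [← delta_induce, ← delta_induce]
    exact (delta_join (x := he.inner) (y := he.outer) (ψ ⁻¹' X)).symm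
  exact cutwidth_le_cutwidth_of_delta_preimage_le (H := he.splice he) ψ.symm ψ.symm.injective
    fun S => (hψ (ψ.symm ⁻¹' S)).trans_eq
      (congrArg (he.splice he).delta (ψ.preimage_symm_preimage S))

end IsCutEnumeration

namespace CutLinkage

theorem ncard_add_ncard_le (L : G.CutLinkage P P' e e') (h : P ⊆ P') (S : Set G.V) :
    (G.cutEdges S ∩ G.edgesWithin P).ncard +
        {t | ¬(G.innerEnd P (e t) ∈ S ↔ G.innerEnd P' (e' t) ∈ S)}.ncard ≤
      (G.cutEdges S ∩ G.edgesWithin P').ncard := by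
  let M : Set (Fin r) := {t | ¬(G.innerEnd P (e t) ∈ S ↔ G.innerEnd P' (e' t) ∈ S)}
  choose f hf hfS using fun t : M => (L.walk t).exists_edge_mem_cutEdges t.2
  have hinj : Function.Injective f := fun s t hst => by
    by_contra hne
    exact L.disjoint s t (Subtype.coe_injective.ne hne) (f s) (hf s) (hst ▸ hf t)
  have hdisj : Disjoint (G.cutEdges S ∩ G.edgesWithin P) (Set.range f) := by
    rw [Set.disjoint_right]
    rintro _ ⟨t, rfl⟩ ht
    exact (L.edges t _ (hf t)).2 ht.2
  rw [← Nat.card_coe_set_eq M, ← Set.ncard_range_of_injective hinj, ← Set.ncard_union_eq hdisj]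
  refine Set.ncard_le_ncard (Set.union_subset ?_ ?_)
  · exact Set.inter_subset_inter_right _ (edgesWithin_mono h)
  · rintro _ ⟨t, rfl⟩
    exact ⟨hfS t, (L.edges t _ (hf t)).1⟩

theorem cutwidth_le_cutwidth_splice (L : G.CutLinkage P P' e e') (h : P ⊆ P')
    (he : G.IsCutEnumeration P e) (he' : G.IsCutEnumeration P' e') :
    G.cutwidth ≤ (he'.splice he).cutwidth := by
  refine he.cutwidth_le_cutwidth_splice_self.trans ?_
  refine cutwidth_join_le_cutwidth_join (A := G.induce P) (A' := G.induce P')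
    (Set.inclusion h) (Set.inclusion_injective h) fun S => ?_
  obtain ⟨U, rfl⟩ : ∃ U, S = Subtype.val ⁻¹' U :=
    ⟨_, (Set.preimage_image_eq S Subtype.val_injective).symm⟩
  have hU := L.ncard_add_ncard_le h U
  rw [← delta_induce, ← delta_induce] at hU
  exact hU

/-- The `t`-th walk of the linkage followed by the `t`-th edge of the larger cut. -/
noncomputable def crossing (L : G.CutLinkage P P' e e') (t : Fin r) :
    G.Walk (G.innerEnd P (e t)) (G.outerEnd P' (e' t)) :=
  (L.walk t).append (.cons (e' t) (ends_eq_or P' (e' t)) (.nil _))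

theorem support_crossing (L : G.CutLinkage P P' e e') (t : Fin r) :
    (L.crossing t).support =
      G.innerEnd P (e t) :: ((L.walk t).support.tail ++ [G.outerEnd P' (e' t)]) := by
  refine (Walk.support_append _ _).trans ?_
  rw [Walk.support_eq_cons (L.walk t)]
  rfl

theorem mem_edges_crossing (L : G.CutLinkage P P' e e') {t : Fin r} {f : G.E} :
    f ∈ (L.crossing t).edges ↔ f ∈ (L.walk t).edges ∨ f = e' t := by
  rw [crossing, Walk.edges_append, List.mem_append]
  exact or_congr_right List.mem_singleton

theorem nodup_support_crossing (L : G.CutLinkage P P' e e') (h : P ⊆ P')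
    (he : G.IsCutEnumeration P e) (he' : G.IsCutEnumeration P' e') (t : Fin r) :
    (L.crossing t).support.Nodup := by
  have hin := innerEnd_mem (he.mem t)
  have hout := outerEnd_notMem (he'.mem t)
  rw [support_crossing, List.nodup_cons, List.mem_append, List.mem_singleton]
  refine ⟨?_, (L.nodup t).append (List.nodup_singleton _) ?_⟩
  · rintro (hmem | heq)
    · exact (L.support_tail t _ hmem).2 hin
    · exact hout (heq ▸ h hin)
  · intro x hx hx'
    exact hout (List.mem_singleton.1 hx' ▸ (L.support_tail t x hx).1)

theorem notMem_edgesWithin_of_mem_edges_crossing (L : G.CutLinkage P P' e e') (h : P ⊆ P')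
    (he' : G.IsCutEnumeration P' e') {t : Fin r} {f : G.E} (hf : f ∈ (L.crossing t).edges) :
    f ∉ G.edgesWithin P ∧ f ∉ G.edgesWithin P'ᶜ := by
  obtain hf | rfl := L.mem_edges_crossing.1 hf
  · have := L.edges t f hf
    exact ⟨this.2, fun hc => hc.1 this.1.1⟩
  · have := he'.mem t
    rw [mem_cutEdges] at this
    exact ⟨fun hc => this (iff_of_true (h hc.1) (h hc.2)), fun hc => this (iff_of_false hc.1 hc.2)⟩

theorem disjoint_edges_crossing (L : G.CutLinkage P P' e e') (he' : G.IsCutEnumeration P' e')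
    {s t : Fin r} (hst : s ≠ t) {f : G.E} (hs : f ∈ (L.crossing s).edges) :
    f ∉ (L.crossing t).edges := by
  have hwalk (i j : Fin r) : e' i ∉ (L.walk j).edges := fun hi =>
    he'.mem i (iff_of_true (L.edges j _ hi).1.1 (L.edges j _ hi).1.2)
  intro ht
  obtain hs | rfl := L.mem_edges_crossing.1 hs <;> obtain ht | ht := L.mem_edges_crossing.1 ht
  · exact L.disjoint s t hst f hs ht
  · exact hwalk t s (ht ▸ hs)
  · exact hwalk s t ht
  · exact hst (he'.injective ht)

/-- The vertices of a splice, as vertices of the whole graph. -/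
def spliceVertex {he : G.IsCutEnumeration P e} {he' : G.IsCutEnumeration P' e'} :
    (he.splice he').V → G.V :=
  Sum.elim (fun u : P => u.1) (fun u : (P'ᶜ : Set G.V) => u.1)

theorem spliceVertex_injective {he : G.IsCutEnumeration P e} {he' : G.IsCutEnumeration P' e'}
    (h : P ⊆ P') : Function.Injective (spliceVertex (he := he) (he' := he')) :=
  Subtype.val_injective.sumElim Subtype.val_injective fun u v huv => v.2 (huv ▸ h u.2)

/-- The walk in the whole graph that replaces an edge of the splice. -/
noncomputable def splicePath (L : G.CutLinkage P P' e e') {he : G.IsCutEnumeration P e}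
    {he' : G.IsCutEnumeration P' e'} : ∀ f : (he.splice he').E,
      G.Walk (spliceVertex ((he.splice he').ends f).1) (spliceVertex ((he.splice he').ends f).2)
  | .inl (.inl f) => .ofEdge f.1
  | .inl (.inr f) => .ofEdge f.1
  | .inr t => L.crossing t

theorem nodup_support_splicePath (L : G.CutLinkage P P' e e') (h : P ⊆ P')
    {he : G.IsCutEnumeration P e} {he' : G.IsCutEnumeration P' e'} :
    ∀ f : (he.splice he').E, (L.splicePath f).support.Nodup
  | .inl (.inl f) => Walk.nodup_support_ofEdge f.1
  | .inl (.inr f) => Walk.nodup_support_ofEdge f.1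
  | .inr t => L.nodup_support_crossing h he he' t

theorem disjoint_edges_splicePath (L : G.CutLinkage P P' e e') (h : P ⊆ P')
    {he : G.IsCutEnumeration P e} {he' : G.IsCutEnumeration P' e'} (f g : (he.splice he').E)
    (hne : f ≠ g) (c : G.E) (hf : c ∈ (L.splicePath f).edges) :
    c ∉ (L.splicePath g).edges := by
  have hout {t : Fin r} {c : G.E} (hc : c ∈ (L.crossing t).edges) :=
    L.notMem_edgesWithin_of_mem_edges_crossing h he' hc
  have heq {f g : G.E} (hf : c ∈ (Walk.ofEdge f).edges) (hg : c ∈ (Walk.ofEdge g).edges) :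
      f = g := (Walk.mem_edges_ofEdge.1 hf).symm.trans (Walk.mem_edges_ofEdge.1 hg)
  intro hg
  obtain (f | f) | s := f <;> obtain (g | g) | t := g
  · exact hne (congrArg (Sum.inl ∘ Sum.inl) (Subtype.ext (heq hf hg)))
  · exact g.2.1 (h (heq hf hg ▸ f.2.1))
  · exact (hout hg).1 (Walk.mem_edges_ofEdge.1 hf ▸ f.2)
  · exact f.2.1 (h (heq hf hg ▸ g.2.1))
  · exact hne (congrArg (Sum.inl ∘ Sum.inr) (Subtype.ext (heq hf hg)))
  · exact (hout hg).2 (Walk.mem_edges_ofEdge.1 hf ▸ f.2)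
  · exact (hout hf).1 (Walk.mem_edges_ofEdge.1 hg ▸ g.2)
  · exact (hout hf).2 (Walk.mem_edges_ofEdge.1 hg ▸ g.2)
  · exact L.disjoint_edges_crossing he' (fun hst => hne (congrArg Sum.inr hst)) hf hg

theorem notMem_range_spliceVertex_of_mem_support (L : G.CutLinkage P P' e e')
    {he : G.IsCutEnumeration P e} {he' : G.IsCutEnumeration P' e'} {f : (he.splice he').E}
    {x : G.V} (hx : x ∈ (L.splicePath f).support)
    (h₁ : x ≠ spliceVertex ((he.splice he').ends f).1)
    (h₂ : x ≠ spliceVertex ((he.splice he').ends f).2) :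
    x ∉ Set.range (spliceVertex (he := he) (he' := he')) := by
  obtain (f | f) | t := f
  · exact absurd (Walk.mem_support_ofEdge.1 hx) (not_or.2 ⟨h₁, h₂⟩)
  · exact absurd (Walk.mem_support_ofEdge.1 hx) (not_or.2 ⟨h₁, h₂⟩)
  · have hx : x ∈ (L.crossing t).support := hx
    rw [support_crossing, List.mem_cons, List.mem_append, List.mem_singleton] at hx
    obtain hx | hx | hx := hx
    · exact absurd hx h₁
    · have hx := L.support_tail t x hx
      rintro ⟨u | u, rfl⟩
      exacts [hx.2 u.2, u.2 hx.1]
    · exact absurd hx h₂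

theorem strongImmersion_splice (L : G.CutLinkage P P' e e') (h : P ⊆ P')
    (he : G.IsCutEnumeration P e) (he' : G.IsCutEnumeration P' e') :
    StrongImmersion (he.splice he') G :=
  ⟨{ vmap := spliceVertex
     inj := spliceVertex_injective h
     emap := L.splicePath
     isPath := L.nodup_support_splicePath h
     edgeDisj := L.disjoint_edges_splicePath h
     strong := fun _ _ => L.notMem_range_spliceVertex_of_mem_support }⟩

end CutLinkage

theorem not_isomorphic_splice (h : P ⊂ P') (he : G.IsCutEnumeration P e)
    (he' : G.IsCutEnumeration P' e') : ¬(he.splice he').Isomorphic G := by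
  rintro ⟨i⟩
  have hcard : Nat.card (P ⊕ (P'ᶜ : Set G.V)) = Nat.card G.V := Nat.card_congr i.fv
  have hlt := Set.ncard_lt_ncard h
  have hcompl := Set.ncard_add_ncard_compl P'
  rw [Nat.card_sum, Nat.card_coe_set_eq, Nat.card_coe_set_eq] at hcard
  omega

end Multigraph

/-! ## Linked layouts -/

namespace Multigraph

variable {G : Multigraph} {k : ℕ}

section lexPrefix

variable {ρ : G.V → ℕ} {S : Set G.V} {v : G.V}

theorem lexPrefix_notMem_of_mem (hv : v ∈ S) :
    lexPrefix (fun u => u ∉ S) ρ v = S ∩ {u | ρ u ≤ ρ v} := by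
  ext u
  by_cases hu : u ∈ S <;> simp [lexPrefix, hv, hu]

theorem lexPrefix_notMem_of_notMem (hv : v ∉ S) :
    lexPrefix (fun u => u ∉ S) ρ v = S ∪ {u | ρ u ≤ ρ v} := by
  ext u
  by_cases hu : u ∈ S <;> simp [lexPrefix, hv, hu, lt_iff_le_not_ge]

theorem delta_lexPrefix_notMem_le {i j : ℕ} (hiS : {u | ρ u < i} ⊆ S)
    (hSj : S ⊆ {u | ρ u < j})
    (hmin : ∀ R, {u | ρ u < i} ⊆ R → R ⊆ {u | ρ u < j} → G.delta S ≤ G.delta R) (v : G.V) :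
    G.delta (lexPrefix (fun u => u ∉ S) ρ v) ≤ G.delta {u | ρ u ≤ ρ v} := by
  have hsub := G.delta_inter_add_delta_union_le S {u | ρ u ≤ ρ v}
  by_cases hv : v ∈ S
  · rw [lexPrefix_notMem_of_mem hv]
    have hvj : ρ v < j := hSj hv
    have := hmin (S ∪ {u | ρ u ≤ ρ v}) (hiS.trans Set.subset_union_left)
      (Set.union_subset hSj fun u hu => lt_of_le_of_lt hu hvj)
    omega
  · rw [lexPrefix_notMem_of_notMem hv]
    have hiv : i ≤ ρ v := not_lt.1 fun h => hv (hiS h)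
    have := hmin (S ∩ {u | ρ u ≤ ρ v})
      (Set.subset_inter hiS fun u hu => (lt_of_lt_of_le hu hiv).le)
      (Set.inter_subset_left.trans hSj)
    omega

theorem exists_delta_lexPrefix_notMem_lt {i j : ℕ} (hiS : {u | ρ u < i} ⊆ S)
    (hSj : S ⊆ {u | ρ u < j}) (hij : i ≤ j)
    (hlt : ∀ t, i ≤ t → t ≤ j → G.delta S < G.delta {u | ρ u < t}) :
    ∃ v, G.delta (lexPrefix (fun u => u ∉ S) ρ v) < G.delta {u | ρ u ≤ ρ v} := by
  have hne : ¬S ⊆ {u | ρ u < i} := fun h =>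
    (hlt i le_rfl hij).ne (congrArg G.delta (h.antisymm hiS))
  obtain ⟨w, hw, hwi⟩ := Set.not_subset.1 hne
  obtain ⟨v, hv, hmax⟩ := S.exists_max_image ρ S.toFinite ⟨w, hw⟩
  have hiv : i ≤ ρ v := (not_lt.1 hwi).trans (hmax w hw)
  have hvj : ρ v < j := hSj hv
  have hSv : S ⊆ {u | ρ u ≤ ρ v} := hmax
  refine ⟨v, ?_⟩
  rw [lexPrefix_notMem_of_mem hv, Set.inter_eq_left.2 hSv]
  simpa only [Order.lt_add_one_iff] using hlt (ρ v + 1) (by omega) (by omega)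

end lexPrefix

theorem exists_optimal_layout (h : G.cutwidth ≤ k) :
    ∃ e : G.V ≃ Fin (Nat.card G.V), G.IsLayout e k ∧
      ∀ {α : Type} [LinearOrder α] (f : G.V → α), G.IsLayout f k →
        (∀ v, G.delta {u | f u ≤ f v} ≤ G.delta {u | e u ≤ e v}) →
        ∀ v, G.delta {u | e u ≤ e v} ≤ G.delta {u | f u ≤ f v} := by
  cases nonempty_fintype G.V
  obtain ⟨ρ, hρ⟩ := (G.cutwidth_le_iff k).1 h
  obtain ⟨e₀, he₀, -⟩ := hρ.exists_equivFin
  obtain ⟨e, he, hmin⟩ := Set.exists_min_image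
    {e : G.V ≃ Fin (Nat.card G.V) | G.IsLayout e k}
    (fun e => ∑ v, G.delta {u | e u ≤ e v}) (Set.toFinite _) ⟨e₀, he₀⟩
  refine ⟨e, he, fun f hf hle => ?_⟩
  obtain ⟨e', he', hiff⟩ := hf.exists_equivFin
  have hsum := hmin e' he'
  simp only [hiff] at hsum
  by_contra! hlt
  obtain ⟨v, hv⟩ := hlt
  exact hsum.not_gt (Finset.sum_lt_sum (fun v _ => hle v) ⟨v, Finset.mem_univ v, hv⟩)

theorem exists_linked_layout (h : G.cutwidth ≤ k) :
    ∃ e : G.V ≃ Fin (Nat.card G.V), G.IsLayout e k ∧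
      ∀ (i j : ℕ) (S : Set G.V), i ≤ j → {u | (e u : ℕ) < i} ⊆ S → S ⊆ {u | (e u : ℕ) < j} →
        ∃ t ∈ Set.Icc i j, G.delta {u | (e u : ℕ) < t} ≤ G.delta S := by
  obtain ⟨e, he, hopt⟩ := exists_optimal_layout h
  refine ⟨e, he, fun i j R hij hiR hRj => ?_⟩
  let ρ (v : G.V) : ℕ := e v
  obtain ⟨S, ⟨hiS, hSj⟩, hmin⟩ := Set.exists_min_image
    {S : Set G.V | {u | ρ u < i} ⊆ S ∧ S ⊆ {u | ρ u < j}} G.delta (Set.toFinite _) ⟨R, hiR, hRj⟩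
  suffices ∃ t ∈ Set.Icc i j, G.delta {u | ρ u < t} ≤ G.delta S from
    this.imp fun t ht => ⟨ht.1, ht.2.trans (hmin R ⟨hiR, hRj⟩)⟩
  by_contra! hlt
  have hle := delta_lexPrefix_notMem_le hiS hSj fun R h₁ h₂ => hmin R ⟨h₁, h₂⟩
  obtain ⟨v, hv⟩ := exists_delta_lexPrefix_notMem_lt hiS hSj hij
    fun t h₁ h₂ => hlt t ⟨h₁, h₂⟩
  have hlayout : G.IsLayout (fun v => toLex (v ∉ S, ρ v)) k :=
    isLayout_toLex (fun u v _ huv => e.injective (Fin.ext huv))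
      fun v => (hle v).trans (he.delta_le v)
  have := hopt _ hlayout
  simp only [Prod.Lex.toLex_le_toLex] at this
  exact (this hle v).not_gt hv

end Multigraph

/-! ## Chains of cuts in an obstruction -/

/-- Divide the interval into `N` blocks: either each of them contains a position of value `lo`, or
one of them does not and takes only `c` values. -/
theorem exists_strictMono_apply_eq_forall_le {N : ℕ} {w : ℕ → ℕ} (c lo s : ℕ)
    (hw : ∀ t ∈ Set.Ico s (s + N ^ c), w t ∈ Set.Ico lo (lo + c)) :
    ∃ (r : ℕ) (g : Fin N → ℕ), r < lo + c ∧ StrictMono g ∧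
      (∀ i, g i ∈ Set.Ico s (s + N ^ c) ∧ w (g i) = r) ∧
      ∀ i j t, g i ≤ t → t ≤ g j → r ≤ w t := by
  induction c generalizing lo s with
  | zero => simpa using hw s (by simp)
  | succ c ih =>
    have block_le (a : Fin N) : s + a * N ^ c + N ^ c ≤ s + N ^ (c + 1) := by
      have := Nat.mul_le_mul_right (N ^ c) a.is_lt
      rw [pow_succ']
      lia
    by_cases h : ∀ a : Fin N, ∃ t ∈ Set.Ico (s + a * N ^ c) (s + a * N ^ c + N ^ c), w t = lo
    · choose g hg hlo using h
      have hmem (i : Fin N) : g i ∈ Set.Ico s (s + N ^ (c + 1)) :=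
        ⟨(Nat.le_add_right _ _).trans (hg i).1, (hg i).2.trans_le (block_le i)⟩
      refine ⟨lo, g, by lia, fun i j hij => ?_, fun i => ⟨hmem i, hlo i⟩, fun i j t hi hj =>
        (hw t ⟨(hmem i).1.trans hi, hj.trans_lt (hmem j).2⟩).1⟩
      have := Nat.mul_le_mul_right (N ^ c) (show (i : ℕ) + 1 ≤ j from hij)
      have := (hg i).2
      have := (hg j).1
      lia
    · push Not at h
      obtain ⟨a, ha⟩ := h
      have hsub {t : ℕ} (ht : t ∈ Set.Ico (s + a * N ^ c) (s + a * N ^ c + N ^ c)) :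
          t ∈ Set.Ico s (s + N ^ (c + 1)) :=
        ⟨(Nat.le_add_right _ _).trans ht.1, ht.2.trans_le (block_le a)⟩
      obtain ⟨r, g, hr, hg, hgw, hmin⟩ := ih (lo + 1) (s + a * N ^ c) fun t ht =>
        ⟨(hw t (hsub ht)).1.lt_of_ne' (ha t ht), by have := (hw t (hsub ht)).2; lia⟩
      exact ⟨r, g, by lia, hg, fun i => ⟨hsub (hgw i).1, (hgw i).2⟩, hmin⟩

namespace Multigraph

variable {G : Multigraph} {k m n r : ℕ}

theorem exists_chain_of_pow_le_card (h : G.cutwidth ≤ k)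
    (hcard : (n + 1) ^ (k + 1) ≤ Nat.card G.V) :
    ∃ r ≤ k, ∃ P : ℕ → Set G.V, Monotone P ∧ (∀ i < n, P i ⊂ P (i + 1)) ∧
      (∀ i, G.delta (P i) = r) ∧ ∀ i S, P i ⊆ S → S ⊆ P (i + 1) → r ≤ G.delta S := by
  obtain ⟨σ, hσ, hlink⟩ := exists_linked_layout h
  have delta_le (t : ℕ) : G.delta {u | (σ u : ℕ) < t} ≤ k :=
    hσ.delta_le_of_lower fun u v huv hv => (show (σ u : ℕ) ≤ σ v from huv).trans_lt hv
  obtain ⟨r, g, hr, hg, hgw, hmin⟩ := exists_strictMono_apply_eq_forall_le (N := n + 1)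
    (w := fun t => G.delta {u | (σ u : ℕ) < t}) (k + 1) 0 0 fun t _ =>
      ⟨zero_le, by simpa [Nat.lt_succ_iff] using delta_le t⟩
  let p (i : ℕ) : ℕ := g (Fin.clamp i n)
  have hp : Monotone p := fun i j hij => hg.monotone <| by
    simpa [Fin.le_def, Fin.clamp] using Or.inl hij
  refine ⟨r, by lia, fun i => {u | (σ u : ℕ) < p i}, fun i j hij u hu => hu.trans_le (hp hij),
    fun i hi => ⟨fun u hu => hu.trans_le (hp i.le_succ), fun hsub => ?_⟩,
    fun i => (hgw _).2, fun i S hiS hSi => ?_⟩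
  · have hpi : p i < p (i + 1) := hg (by simp only [Fin.lt_def, Fin.coe_clamp]; lia)
    have hpV : p i < Nat.card G.V := by simpa using (hgw (Fin.clamp i n)).1.2.trans_le (by simpa)
    have hmem := hsub (a := σ.symm ⟨p i, hpV⟩)
    simp [hpi] at hmem
  · obtain ⟨t, ⟨hit, hti⟩, ht⟩ := hlink _ _ S (hp i.le_succ) hiS hSi
    exact (hmin _ _ t hit hti).trans ht

theorem exists_realizes_of_mem_obstructions
    (hG : G ∈ obstructions StrongImmersion (cutwidthClass k)) (hm : (r + 1) * (2 * k + 2) ≤ m)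
    {P P' : Set G.V} {e e' : Fin r → G.E} (L : G.CutLinkage P P' e e') (h : P ⊂ P')
    (he : G.IsCutEnumeration P e) (he' : G.IsCutEnumeration P' e') :
    ∃ I : Interface r m k,
      Realizes false (G.induce P) he.inner I ∧ Realizes true (G.induce P'ᶜ) he'.outer I :=
  exists_realizes_of_cutwidth_join_le hm <|
    hG.2 (he.splice he') (L.strongImmersion_splice h.subset he he') (not_isomorphic_splice h he he')

theorem le_card_interface_of_chain (hG : G ∈ obstructions StrongImmersion (cutwidthClass k))
    (hm : (r + 1) * (2 * k + 2) ≤ m) {P : ℕ → Set G.V} (hmono : Monotone P)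
    (hlt : ∀ i < n, P i ⊂ P (i + 1)) (hP : ∀ i, G.delta (P i) = r)
    (hr : ∀ i S, P i ⊆ S → S ⊆ P (i + 1) → r ≤ G.delta S) :
    n ≤ Nat.card (Interface r m k) := by
  obtain ⟨e, he, hL⟩ := exists_linked_cutEnumerations hmono hP hr
  choose I hIl hIr using fun i : Fin n => exists_realizes_of_mem_obstructions hG hm
    (hL i (i + 1) i.1.le_succ).some (hlt i i.2) (he i) (he (i + 1))
  suffices hI : Function.Injective I by simpa using Nat.card_le_card_of_injective I hI
  -- Equal interfaces at `i < j` would allow to put `P j` before the complement of `P (i + 1)`.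
  have ne_of_lt {i j : Fin n} (hij : i < j) : I i ≠ I j := fun h => hG.1 <|
    ((hL (i + 1) j hij).some.cutwidth_le_cutwidth_splice (hmono hij) (he (i + 1)) (he j)).trans
      (cutwidth_join_le_of_realizes (hIl j) (h ▸ hIr i))
  exact fun i j h => by_contra fun hij =>
    (Ne.lt_or_gt hij).elim (ne_of_lt · h) (ne_of_lt · h.symm)

theorem card_lt_of_mem_obstructions (hG : G ∈ obstructions StrongImmersion (cutwidthClass k))
    (hm : (k + 2) * (2 * k + 2) ≤ m) :
    Nat.card G.V < (m ^ (2 * (k + 1)) * (k + 1) ^ (2 * m) + 2) ^ (k + 2) := by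
  by_contra! hcard
  obtain ⟨r, hr, P, hmono, hlt, hP, hmin⟩ :=
    exists_chain_of_pow_le_card (cutwidth_le_succ_of_mem_obstructions hG) hcard
  have hchain := le_card_interface_of_chain hG
    ((Nat.mul_le_mul_right _ (Nat.succ_le_succ hr)).trans hm) hmono hlt hP hmin
  have hm0 : 0 < m := lt_of_lt_of_le (by positivity) hm
  have hcount : m ^ (2 * r) * (k + 1) ^ (2 * m) ≤ m ^ (2 * (k + 1)) * (k + 1) ^ (2 * m) := by
    gcongr
  rw [Interface.card_eq] at hchain
  lia

end Multigraph

/-! ## Arithmetic of the bound -/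

theorem pow_add_two_le_succ_pow {x n : ℕ} (hx : 1 ≤ x) (hn : 2 ≤ n) : x ^ n + 2 ≤ (x + 1) ^ n := by
  obtain ⟨d, rfl⟩ := Nat.exists_eq_add_of_le' hn
  have hpos : 1 ≤ x ^ d := Nat.one_le_pow _ _ hx
  calc x ^ (d + 2) + 2 ≤ x ^ d * (x + 1) ^ 2 := by rw [pow_add]; nlinarith
    _ ≤ (x + 1) ^ d * (x + 1) ^ 2 := by gcongr; lia
    _ = (x + 1) ^ (d + 2) := (pow_add _ _ _).symm

theorem mul_pow_add_two_le_mul_succ_pow {a x n : ℕ} (ha : 1 ≤ a) (hx : 1 ≤ x) (hn : 2 ≤ n) :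
    a * x ^ n + 2 ≤ a * (x + 1) ^ n := by
  nlinarith [Nat.mul_le_mul_left a (pow_add_two_le_succ_pow hx hn)]

theorem mul_pow_pow_succ_le_mul_pow_pow {b l m n c : ℕ} (hb : 0 < b) (hml : m ≤ l)
    (hmb : m ≤ b ^ c) (hexp : c * (2 * n) + 2 * m * (n + 1) ≤ 2 * l * n) :
    (m ^ (2 * n) * b ^ (2 * m)) ^ (n + 1) ≤ (l ^ (2 * n) * b ^ (2 * l)) ^ n :=
  calc (m ^ (2 * n) * b ^ (2 * m)) ^ (n + 1)
      = m ^ (2 * n * n) * (m ^ (2 * n) * b ^ (2 * m * (n + 1))) := by ring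
    _ ≤ l ^ (2 * n * n) * ((b ^ c) ^ (2 * n) * b ^ (2 * m * (n + 1))) := by gcongr
    _ = l ^ (2 * n * n) * b ^ (c * (2 * n) + 2 * m * (n + 1)) := by rw [← pow_mul, ← pow_add]
    _ ≤ l ^ (2 * n * n) * b ^ (2 * l * n) := by gcongr
    _ = (l ^ (2 * n) * b ^ (2 * l)) ^ n := by ring

theorem rpow_logb_add_logb {b x y : ℝ} (hb : 0 < b) (hb1 : b ≠ 1) (hx : 0 < x) (hy : 0 < y)
    (p q : ℝ) : b ^ (p * Real.logb b x + q * Real.logb b y) = x ^ p * y ^ q := by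
  rw [Real.rpow_add hb, mul_comm p, mul_comm q, Real.rpow_mul hb.le, Real.rpow_mul hb.le,
    Real.rpow_logb hb hb1 hx, Real.rpow_logb hb hb1 hy]

namespace Multigraph

theorem card_le_of_mem_obstructions {G : Multigraph} {k ℓ : ℕ}
    (hG : G ∈ obstructions StrongImmersion (cutwidthClass k))
    (hℓ : ℓ = (2 * k + 3) * (2 * k + 6)) :
    Nat.card G.V ≤ (ℓ ^ (2 * (k + 1)) * (k + 2) ^ (2 * ℓ)) ^ (k + 1) := by
  set m := (k + 2) * (2 * k + 2) with hm
  have hm1 : 1 ≤ m := Nat.one_le_iff_ne_zero.2 (by positivity)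
  have hmcube : m ≤ (k + 2) ^ 3 := by
    rw [hm, pow_succ' (k + 2) 2]
    gcongr
    nlinarith
  calc Nat.card G.V
      ≤ (m ^ (2 * (k + 1)) * (k + 1) ^ (2 * m) + 2) ^ (k + 2) :=
        (card_lt_of_mem_obstructions hG hm.ge).le
    _ ≤ (m ^ (2 * (k + 1)) * (k + 2) ^ (2 * m)) ^ (k + 2) := by
        gcongr
        exact mul_pow_add_two_le_mul_succ_pow (Nat.one_le_pow _ _ hm1) (by lia) (by lia)
    _ ≤ (ℓ ^ (2 * (k + 1)) * (k + 2) ^ (2 * ℓ)) ^ (k + 1) :=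
        mul_pow_pow_succ_le_mul_pow_pow (by lia) (by nlinarith) hmcube (by nlinarith)

end Multigraph

open Multigraph in
/-- every minimal strong-immersion obstruction for cutwidth at most `k`
has at most `N^(k+1)` vertices, where `ℓ = (2k+3)(2k+6)` and
`N = 2^(2((k+1)·log₂ℓ + ℓ·log₂(k+2))) + 2`. -/
theorem cutwidth_obstruction_vertex_bound
    (k : ℕ) (hk : 1 ≤ k) (ℓ : ℕ) (hℓ : ℓ = (2 * k + 3) * (2 * k + 6))
    (N : ℝ)
    (hN : N = (2 : ℝ) ^ (2 * (((k : ℝ) + 1) * Real.logb 2 (ℓ : ℝ)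
                + (ℓ : ℝ) * Real.logb 2 ((k : ℝ) + 2))) + 2)
    (G : Multigraph)
    (hG : G ∈ obstructions StrongImmersion (cutwidthClass k)) :
    (Nat.card G.V : ℝ) ≤ N ^ (k + 1) := by
  have hNℓ : N = ((ℓ ^ (2 * (k + 1)) * (k + 2) ^ (2 * ℓ) : ℕ) : ℝ) + 2 := by
    have hℓ0 : (0 : ℝ) < ℓ := by rw [hℓ]; positivity
    rw [hN, mul_add, ← mul_assoc, ← mul_assoc,
      rpow_logb_add_logb two_pos (by norm_num) hℓ0 (by positivity)]
    norm_cast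
  calc (Nat.card G.V : ℝ)
      ≤ ((ℓ ^ (2 * (k + 1)) * (k + 2) ^ (2 * ℓ) : ℕ) : ℝ) ^ (k + 1) := by
        exact_mod_cast card_le_of_mem_obstructions hG hℓ
    _ ≤ N ^ (k + 1) := by
      gcongr
      linarith
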